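/- arXiv:2505.19371 — 11 statements merged into one kernel-verified Lean document; each statement's English description precedes it below -/
import Mathlib

section
/- Let V ≥ 1, let p ∈ Δ_V have entries sorted in non-increasing order (p₁ ≥ p₂ ≥ … ≥ p_V), and let φ be primal valid. For a subset Q = {i₁,…,i_k} ⊆ {1,…,V} of size k, define the primal support loss L(Q) = min_{q ∈ Δ_k} [ Σ_{j=1}^k d_φ(q_j, p_{i_j}) + Σ_{i ∉ Q} d_φ(0, p_i) ] (the minimum exists since the objective is continuous on the compact set Δ_k). Then for every subset S' ⊆ {1,…,V} of size k, L(S') ≥ L({1,…,k}); that is, the set of the k largest entries of p minimizes the ℓ₀-regularized primal Bregman decoding loss among all supports of size k. -/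
/-!
Since `d_φ(x, y) - d_φ(0, y) = φ x - φ 0 - φ' y * x`, the objective of a support `S` at `q` equals
`∑ i ∈ S, (φ (q i) - φ 0 - φ' (p i) * q i)` plus the constant `∑ i, d_φ(0, p i)`
(`objective_eq`), so `p` enters only through `-φ' (p i) * q i`. By convexity `φ'` is monotone on
`[0, 1]`, hence moving the mass of `q` from the `j`-th smallest index of `S'` to the index `j`,
where `p` is at least as large, does not increase the objective. Thus every value attained on `S'`
is at least some value attained on `{i | i < k}`. Passing to infima uses that Bregman
divergences are nonnegative (so the infimum for `{i | i < k}` is bounded below) and that `S'` is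
nonempty (so it carries a feasible `q`).
-/

open Finset Set Filter

/-- One-dimensional Bregman divergence `d_φ(x,y) = φ(x) − φ(y) − φ'(y)(x−y)`,
with the derivative `φ'` given explicitly. -/
noncomputable def breg (φ φ' : ℝ → ℝ) (x y : ℝ) : ℝ := φ x - φ y - φ' y * (x - y)

/-- The primal support loss `L(Q)`: the infimum, over sub-probability vectors `q`
supported (and summing to one) on `Q`, of the primal Bregman objective
`Σ_{i∈Q} d_φ(q_i, p_i) + Σ_{i∉Q} d_φ(0, p_i)`. -/
noncomputable def primalLoss {V : ℕ} (φ φ' : ℝ → ℝ) (p : Fin V → ℝ) (S : Finset (Fin V)) : ℝ :=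
  sInf {r : ℝ | ∃ q : Fin V → ℝ, (∀ i, q i ∈ Set.Icc (0:ℝ) 1) ∧ ((∑ i ∈ S, q i) = 1) ∧
    r = (∑ i ∈ S, breg φ φ' (q i) (p i)) + ∑ i ∈ Sᶜ, breg φ φ' 0 (p i)}

theorem breg_nonneg {φ φ' : ℝ → ℝ} (hconv : ConvexOn ℝ (Set.Icc 0 1) φ)
    (hderiv : ∀ x ∈ Set.Icc (0:ℝ) 1, HasDerivWithinAt φ (φ' x) (Set.Icc 0 1) x)
    {x y : ℝ} (hx : x ∈ Set.Icc (0:ℝ) 1) (hy : y ∈ Set.Icc (0:ℝ) 1) : 0 ≤ breg φ φ' x y := by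
  unfold breg
  rcases lt_trichotomy x y with h | h | h
  · have := hconv.slope_le_of_hasDerivWithinAt hx hy h (hderiv y hy)
    rw [slope_def_field, div_le_iff₀ (by linarith)] at this
    linarith
  · simp [h]
  · have := hconv.le_slope_of_hasDerivWithinAt hy hx h (hderiv y hy)
    rw [slope_def_field, le_div_iff₀ (by linarith)] at this
    linarith

/-- The derivative of a convex function is monotone: add the nonnegative divergences
`d_φ(x, y)` and `d_φ(y, x)`. -/
theorem deriv_mono_of_convex {φ φ' : ℝ → ℝ} (hconv : ConvexOn ℝ (Set.Icc 0 1) φ)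
    (hderiv : ∀ x ∈ Set.Icc (0:ℝ) 1, HasDerivWithinAt φ (φ' x) (Set.Icc 0 1) x)
    {x y : ℝ} (hx : x ∈ Set.Icc (0:ℝ) 1) (hy : y ∈ Set.Icc (0:ℝ) 1) (hxy : x ≤ y) :
    φ' x ≤ φ' y := by
  rcases hxy.eq_or_lt with rfl | h
  · exact le_rfl
  · have h1 := breg_nonneg hconv hderiv hx hy
    have h2 := breg_nonneg hconv hderiv hy hx
    unfold breg at h1 h2
    by_contra! hlt
    nlinarith [mul_pos (sub_pos.2 h) (sub_pos.2 hlt)]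

/-- The objective splits into a part carried by the support and a constant independent of it. -/
theorem objective_eq {V : ℕ} (φ φ' : ℝ → ℝ) (p q : Fin V → ℝ) (S : Finset (Fin V)) :
    (∑ i ∈ S, breg φ φ' (q i) (p i)) + ∑ i ∈ Sᶜ, breg φ φ' 0 (p i) =
      (∑ i ∈ S, (φ (q i) - φ 0 - φ' (p i) * q i)) + ∑ i, breg φ φ' 0 (p i) := by
  rw [← Finset.sum_add_sum_compl S (fun i => breg φ φ' 0 (p i)), ← add_assoc,
    ← Finset.sum_add_distrib]
  congr 1
  refine Finset.sum_congr rfl fun i _ => ?_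
  unfold breg
  ring

/-- Primal Bregman decoding is greedy. For a primal valid `φ` and `p ∈ Δ_V`
sorted in non-increasing order, the set `{1,…,k}` of the `k` largest entries of `p`
minimizes the primal support loss among all supports of size `k`. -/
theorem primal_bregman_decoding_is_greedy
    (V k : ℕ) (hV : 1 ≤ V) (hk : 1 ≤ k)
    (p : Fin V → ℝ) (hp0 : ∀ i, p i ∈ Set.Icc (0:ℝ) 1) (hp1 : (∑ i, p i) = 1)
    (hsorted : ∀ i j : Fin V, i ≤ j → p j ≤ p i)
    (φ φ' : ℝ → ℝ)
    (hconv : ConvexOn ℝ (Set.Icc 0 1) φ)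
    (hderiv : ∀ x ∈ Set.Icc (0:ℝ) 1, HasDerivWithinAt φ (φ' x) (Set.Icc 0 1) x)
    (hcont : ContinuousOn φ' (Set.Icc 0 1))
    (hstrict : StrictConvexOn ℝ (Set.Ioo 0 1) φ)
    (S' : Finset (Fin V)) (hcard : S'.card = k) :
    primalLoss φ φ' p (Finset.univ.filter (fun i => (i : ℕ) < k)) ≤ primalLoss φ φ' p S' := by
  have hkV : k ≤ V := by
    simpa [hcard] using S'.card_le_univ
  -- `e j` is the `j`-th smallest element of `S'`.
  let e : Fin k ↪o Fin V := S'.orderEmbOfFin hcard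
  have sum_S' : ∀ f : Fin V → ℝ, ∑ i ∈ S', f i = ∑ j : Fin k, f (e j) := fun f => by
    rw [← Finset.map_orderEmbOfFin_univ S' hcard, Finset.sum_map]
    rfl
  have sum_S : ∀ f : Fin V → ℝ, ∑ i ∈ Finset.univ.filter (fun i : Fin V => (i : ℕ) < k), f i
      = ∑ j : Fin k, f (Fin.castLE hkV j) := fun f => by
    symm
    refine Finset.sum_bij (fun j _ => Fin.castLE hkV j) ?_ ?_ ?_ ?_
    · intro j _
      simp
    · intro a _ b _ h
      exact Fin.castLE_injective hkV h
    · intro b hb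
      exact ⟨⟨b, (Finset.mem_filter.1 hb).2⟩, Finset.mem_univ _, rfl⟩
    · intro j _
      rfl
  have he : ∀ j : Fin k, Fin.castLE hkV j ≤ e j := fun j => by
    have key : ∀ n (hn : n < k), n ≤ (e ⟨n, hn⟩ : ℕ) := by
      intro n
      induction n with
      | zero => intro _; exact Nat.zero_le _
      | succ n ih =>
        intro hn
        have h1 := ih (by omega)
        have h2 : e ⟨n, by omega⟩ < e ⟨n + 1, hn⟩ := e.strictMono (by simp)
        have h3 : (e ⟨n, by omega⟩ : ℕ) < e ⟨n + 1, hn⟩ := h2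
        omega
    exact key j j.2
  unfold primalLoss
  apply le_csInf
  · obtain ⟨a, ha⟩ : S'.Nonempty := Finset.card_pos.1 (by omega)
    refine ⟨_, fun i => if i = a then 1 else 0, fun i => ?_, ?_, rfl⟩
    · dsimp only
      split_ifs <;> simp
    · simp [ha]
  · rintro r ⟨q, hq, hsum, rfl⟩
    -- Transport of `q` from `S'` to the first `k` indices along `e`.
    let q' : Fin V → ℝ := fun i => if h : (i : ℕ) < k then q (e ⟨i, h⟩) else 0
    have hq' : ∀ j : Fin k, q' (Fin.castLE hkV j) = q (e j) := fun j => by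
      simp [q']
    refine le_trans (csInf_le ?_ ⟨q', fun i => ?_, ?_, rfl⟩) ?_
    · refine ⟨0, ?_⟩
      rintro r ⟨u, hu, -, rfl⟩
      exact add_nonneg
        (Finset.sum_nonneg fun i _ => breg_nonneg hconv hderiv (hu i) (hp0 i))
        (Finset.sum_nonneg fun i _ => breg_nonneg hconv hderiv (by simp) (hp0 i))
    · dsimp only [q']
      split_ifs
      · exact hq _
      · simp
    · rw [sum_S, ← hsum, sum_S']
      exact Finset.sum_congr rfl fun j _ => hq' j
    · rw [objective_eq, objective_eq, sum_S, sum_S']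
      refine add_le_add_left (Finset.sum_le_sum fun j _ => ?_) _
      rw [hq']
      have hmono := deriv_mono_of_convex hconv hderiv (hp0 (e j)) (hp0 (Fin.castLE hkV j))
        (hsorted _ _ (he j))
      have := mul_le_mul_of_nonneg_right hmono (hq (e j)).1
      linarith
end

section
/- Let V ≥ 1, let p ∈ Δ_V have entries sorted in non-increasing order, and let φ : [0,1] → ℝ be dual valid, continuously differentiable on [0,1] with φ'(0) = 0, and suppose the derivative φ' is convex on [0,1]. For a subset Q = {i₁,…,i_k} ⊆ {1,…,V} of size k, define the dual support loss L*(Q) = min_{q ∈ Δ_k} [ Σ_{j=1}^k d_φ(p_{i_j}, q_j) + Σ_{i ∉ Q} d_φ(p_i, 0) ]. Then for every subset S' ⊆ {1,…,V} of size k, L*(S') ≥ L*({1,…,k}); that is, the set of the k largest entries of p minimizes the dual Bregman decoding loss among all supports of size k. -/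
/-!
Up to the constant `∑ i, d_φ(p i, 0)`, a support `S` with weights `q` costs
`∑ i ∈ S, (φ 0 - φ (q i) + φ' (q i) * q i - φ' (q i) * p i)`, so the vector `p` enters only through
the terms `-φ' (q i) * p i`. Dual validity forces `φ' ≥ 0` on `[0,1]` (`deriv_nonneg_of_dual_valid`):
the derivative `y * φ'' y` of the convex function `y ↦ d_φ(0, y)` is monotone and tends to `0` at
`0⁺`, so `φ'' ≥ 0`. Hence transporting weights `q` from `S'` to the first `k` indices along the
order-preserving bijection, which never decreases the corresponding entries of `p`, does not
increase the cost.
-/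

open Finset Set Filter

/-- The dual support loss `L*(Q)`: the infimum, over probability vectors `q`
supported (and summing to one) on `Q`, of the dual Bregman objective
`Σ_{i∈Q} d_φ(p_i, q_i) + Σ_{i∉Q} d_φ(p_i, 0)`. -/
noncomputable def dualLoss {V : ℕ} (φ φ' : ℝ → ℝ) (p : Fin V → ℝ) (S : Finset (Fin V)) : ℝ :=
  sInf {r : ℝ | ∃ q : Fin V → ℝ, (∀ i, q i ∈ Set.Icc (0:ℝ) 1) ∧ ((∑ i ∈ S, q i) = 1) ∧
    r = (∑ i ∈ S, breg φ φ' (p i) (q i)) + ∑ i ∈ Sᶜ, breg φ φ' (p i) 0}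

/-- Convexity of `y ↦ d_φ(0, y)` together with `y φ''(y) → 0` makes `φ'` monotone on `[0,1]`, hence
nonnegative there. -/
lemma deriv_nonneg_of_dual_valid (φ φ' φ'' : ℝ → ℝ)
    (hd1 : ∀ t ∈ Set.Ioc (0:ℝ) 1, HasDerivWithinAt φ (φ' t) (Set.Ioc 0 1) t)
    (hd2 : ∀ t ∈ Set.Ioc (0:ℝ) 1, HasDerivWithinAt φ' (φ'' t) (Set.Ioc 0 1) t)
    (hlim : Filter.Tendsto (fun t => t * φ'' t) (nhdsWithin 0 (Set.Ioi 0)) (nhds 0))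
    (hsc2 : StrictConvexOn ℝ (Set.Ioc 0 1) (fun y => breg φ φ' 0 y))
    (hC1cont : ContinuousOn φ' (Set.Icc 0 1)) (hφ'0 : φ' 0 = 0) :
    ∀ y ∈ Set.Icc (0:ℝ) 1, 0 ≤ φ' y := by
  have hder : ∀ t ∈ Set.Ioc (0:ℝ) 1,
      HasDerivWithinAt (fun y => breg φ φ' 0 y) (t * φ'' t) (Set.Ioc 0 1) t := by
    intro t ht
    have h := ((hd1 t ht).const_sub (φ 0)).sub
      ((hd2 t ht).mul ((hasDerivWithinAt_id t (Set.Ioc 0 1)).const_sub 0))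
    refine h.congr_deriv ?_
    simp only [id]
    ring
  have hmono : ∀ x y : ℝ, 0 < x → x < y → y ≤ 1 → x * φ'' x ≤ y * φ'' y := by
    intro x y hx hxy hy
    have hxm : x ∈ Set.Ioc (0:ℝ) 1 := ⟨hx, by linarith⟩
    have hym : y ∈ Set.Ioc (0:ℝ) 1 := ⟨by linarith, hy⟩
    exact (hsc2.convexOn.le_slope_of_hasDerivWithinAt hxm hym hxy (hder x hxm)).trans
      (hsc2.convexOn.slope_le_of_hasDerivWithinAt hxm hym hxy (hder y hym))
  have hnn : ∀ y ∈ Set.Ioc (0:ℝ) 1, 0 ≤ φ'' y := by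
    intro y hy
    have h0 : 0 ≤ y * φ'' y := by
      refine le_of_tendsto hlim ?_
      filter_upwards [Ioo_mem_nhdsGT hy.1] with x hx
      exact hmono x y hx.1 hx.2 hy.2
    exact nonneg_of_mul_nonneg_right h0 hy.1
  have hφ'mono : MonotoneOn φ' (Set.Icc 0 1) := by
    have hat : ∀ x ∈ Set.Ioo (0:ℝ) 1, HasDerivAt φ' (φ'' x) x := fun x hx =>
      (hd2 x ⟨hx.1, hx.2.le⟩).hasDerivAt (Ioc_mem_nhds hx.1 hx.2)
    refine monotoneOn_of_deriv_nonneg (convex_Icc 0 1) hC1cont ?_ ?_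
    · rw [interior_Icc]
      exact fun x hx => (hat x hx).differentiableAt.differentiableWithinAt
    · rw [interior_Icc]
      intro x hx
      rw [(hat x hx).deriv]
      exact hnn x ⟨hx.1, hx.2.le⟩
  intro y hy
  rw [← hφ'0]
  exact hφ'mono ⟨le_rfl, zero_le_one⟩ hy hy.1

lemma breg_bddBelow (φ φ' : ℝ → ℝ) (hφ : ContinuousOn φ (Set.Icc 0 1))
    (hφ' : ContinuousOn φ' (Set.Icc 0 1)) (x : ℝ) :
    ∃ m : ℝ, ∀ y ∈ Set.Icc (0:ℝ) 1, m ≤ breg φ φ' x y := by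
  have hc : ContinuousOn (fun y => breg φ φ' x y) (Set.Icc 0 1) :=
    (continuousOn_const.sub hφ).sub (hφ'.mul (continuousOn_const.sub continuousOn_id))
  obtain ⟨m, hm⟩ := isCompact_Icc.bddBelow_image hc
  exact ⟨m, fun y hy => hm ⟨y, hy, rfl⟩⟩

/-- The cost of a support relative to the cost `∑ i, d_φ(p i, 0)` of the empty one. -/
lemma cost_eq {V : ℕ} (φ φ' : ℝ → ℝ) (p q : Fin V → ℝ) (S : Finset (Fin V)) :
    (∑ i ∈ S, breg φ φ' (p i) (q i)) + ∑ i ∈ Sᶜ, breg φ φ' (p i) 0 =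
      (∑ i ∈ S, (breg φ φ' (p i) (q i) - breg φ φ' (p i) 0)) + ∑ i, breg φ φ' (p i) 0 := by
  rw [Finset.sum_sub_distrib, ← Finset.sum_add_sum_compl S (fun i => breg φ φ' (p i) 0)]
  ring

lemma sum_filter_lt_eq {V k : ℕ} (h : k ≤ V) (F : Fin V → ℝ) :
    ∑ i ∈ Finset.univ.filter (fun i : Fin V => (i : ℕ) < k), F i =
      ∑ j : Fin k, F (Fin.castLE h j) := by
  symm
  refine Finset.sum_bij (fun j _ => Fin.castLE h j) ?_ ?_ ?_ ?_
  · intro j _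
    simp
  · intro a _ b _ hab
    exact Fin.castLE_injective h hab
  · intro b hb
    exact ⟨⟨b, (Finset.mem_filter.mp hb).2⟩, Finset.mem_univ _, rfl⟩
  · intro j _
    rfl

lemma sum_orderEmb_eq {V k : ℕ} (S : Finset (Fin V)) (h : S.card = k) (F : Fin V → ℝ) :
    ∑ i ∈ S, F i = ∑ j : Fin k, F (S.orderEmbOfFin h j) := by
  conv_lhs => rw [← Finset.map_orderEmbOfFin_univ S h]
  rw [Finset.sum_map]
  rfl

lemma le_orderEmb {V k : ℕ} (S : Finset (Fin V)) (h : S.card = k) :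
    ∀ (n : ℕ) (hn : n < k), n ≤ (S.orderEmbOfFin h ⟨n, hn⟩ : ℕ) := by
  intro n
  induction n with
  | zero => intro _; exact Nat.zero_le _
  | succ n ih =>
    intro hn
    have h1 := ih (by omega)
    have h2 : S.orderEmbOfFin h ⟨n, by omega⟩ < S.orderEmbOfFin h ⟨n + 1, hn⟩ :=
      (S.orderEmbOfFin h).strictMono (by simp)
    have h3 : (S.orderEmbOfFin h ⟨n, by omega⟩ : ℕ) < S.orderEmbOfFin h ⟨n + 1, hn⟩ := h2
    omega

/-- Dual Bregman decoding is greedy under convexity of `φ'`.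
Here `φ` is dual valid (thrice differentiable on `(0,1]`, `x·φ''(x) → 0` as `x → 0⁺`,
`y ↦ d_φ(x,y)` strictly convex on `[x,1]` for `x ∈ (0,1]`, and `y ↦ d_φ(0,y)` strictly
convex on `(0,1]`), continuously differentiable on `[0,1]` with `φ'(0) = 0`, and `φ'`
is convex on `[0,1]`. Then the top-`k` support minimizes the dual support loss. -/
theorem dual_bregman_decoding_is_greedy_convex_deriv
    (V k : ℕ) (hV : 1 ≤ V) (hk : 1 ≤ k)
    (p : Fin V → ℝ) (hp0 : ∀ i, p i ∈ Set.Icc (0:ℝ) 1) (hp1 : (∑ i, p i) = 1)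
    (hsorted : ∀ i j : Fin V, i ≤ j → p j ≤ p i)
    (φ φ' φ'' φ''' : ℝ → ℝ)
    (hd1 : ∀ t ∈ Set.Ioc (0:ℝ) 1, HasDerivWithinAt φ (φ' t) (Set.Ioc 0 1) t)
    (hd2 : ∀ t ∈ Set.Ioc (0:ℝ) 1, HasDerivWithinAt φ' (φ'' t) (Set.Ioc 0 1) t)
    (hd3 : ∀ t ∈ Set.Ioc (0:ℝ) 1, HasDerivWithinAt φ'' (φ''' t) (Set.Ioc 0 1) t)
    (hlim : Filter.Tendsto (fun t => t * φ'' t) (nhdsWithin 0 (Set.Ioi 0)) (nhds 0))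
    (hsc1 : ∀ t ∈ Set.Ioc (0:ℝ) 1, StrictConvexOn ℝ (Set.Icc t 1) (fun y => breg φ φ' t y))
    (hsc2 : StrictConvexOn ℝ (Set.Ioc 0 1) (fun y => breg φ φ' 0 y))
    (hC1 : ∀ t ∈ Set.Icc (0:ℝ) 1, HasDerivWithinAt φ (φ' t) (Set.Icc 0 1) t)
    (hC1cont : ContinuousOn φ' (Set.Icc 0 1))
    (hφ'0 : φ' 0 = 0)
    (hφ'conv : ConvexOn ℝ (Set.Icc 0 1) φ')
    (S' : Finset (Fin V)) (hcard : S'.card = k) :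
    dualLoss φ φ' p (Finset.univ.filter (fun i => (i : ℕ) < k)) ≤ dualLoss φ φ' p S' := by
  have hpos := deriv_nonneg_of_dual_valid φ φ' φ'' hd1 hd2 hlim hsc2 hC1cont hφ'0
  have hφc : ContinuousOn φ (Set.Icc 0 1) := fun t ht => (hC1 t ht).continuousWithinAt
  have hkV : k ≤ V := by
    rw [← hcard]
    simpa using S'.card_le_univ
  unfold dualLoss
  refine le_csInf ?_ ?_
  · obtain ⟨a, ha⟩ : S'.Nonempty := Finset.card_pos.mp (by omega)
    refine ⟨_, fun i => if i = a then 1 else 0, ?_, ?_, rfl⟩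
    · intro i
      dsimp only
      split_ifs <;> simp
    · simp [ha]
  · rintro r ⟨q, hq, hqs, rfl⟩
    -- the weights of `S'` carried over to the first `k` indices, in increasing order
    set q' : Fin V → ℝ := fun i =>
      if h : (i : ℕ) < k then q (S'.orderEmbOfFin hcard ⟨i, h⟩) else 0 with hq'
    have hq'cast : ∀ j : Fin k, q' (Fin.castLE hkV j) = q (S'.orderEmbOfFin hcard j) := by
      intro j
      simp [hq']
    refine csInf_le_of_le ?_ ⟨q', ?_, ?_, rfl⟩ ?_
    · choose m hm using breg_bddBelow φ φ' hφc hC1cont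
      refine ⟨(∑ i ∈ Finset.univ.filter (fun i : Fin V => (i : ℕ) < k), m (p i)) +
        ∑ i ∈ (Finset.univ.filter (fun i : Fin V => (i : ℕ) < k))ᶜ, breg φ φ' (p i) 0, ?_⟩
      rintro s ⟨u, hu, _, rfl⟩
      gcongr with i _
      exact hm _ _ (hu i)
    · intro i
      simp only [hq']
      split_ifs
      · exact hq _
      · simp
    · rw [sum_filter_lt_eq hkV, ← hqs, sum_orderEmb_eq S' hcard]
      exact Finset.sum_congr rfl fun j _ => hq'cast j
    · rw [cost_eq, cost_eq, sum_filter_lt_eq hkV, sum_orderEmb_eq S' hcard]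
      refine add_le_add_left (Finset.sum_le_sum fun j _ => ?_) _
      rw [hq'cast]
      have hle : p (S'.orderEmbOfFin hcard j) ≤ p (Fin.castLE hkV j) :=
        hsorted _ _ (le_orderEmb S' hcard j j.2)
      have hmul := mul_le_mul_of_nonneg_left hle (hpos _ (hq (S'.orderEmbOfFin hcard j)))
      simp only [breg, hφ'0]
      linarith
end

section
/- Let V ≥ 1, let p ∈ Δ_V have entries sorted in non-increasing order, and let φ : [0,1] → ℝ be dual valid, continuously differentiable on [0,1] with φ'(0) = 0, nondecreasing on [0,1], and such that the elasticity u(x) = x·φ''(x)/φ'(x) is nondecreasing on (0,1]. For a subset Q = {i₁,…,i_k} ⊆ {1,…,V} of size k, define the dual support loss L*(Q) = min_{q ∈ Δ_k} [ Σ_{j=1}^k d_φ(p_{i_j}, q_j) + Σ_{i ∉ Q} d_φ(p_i, 0) ]. Then for every subset S' ⊆ {1,…,V} of size k, L*(S') ≥ L*({1,…,k}). -/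
/-!
Since `φ' 0 = 0`, the loss of a support `S` with weights `q` is, up to a term depending only on
`q` and on `|S|`, equal to `∑ i, φ (p i) - ∑ i ∈ S, φ' (q i) * p i`. As `φ` is nondecreasing,
`φ' ≥ 0`, so carrying the weights `q` of `S'` over to the top-`k` support along the order-preserving
bijection `S' → {0, …, k - 1}`, which can only increase the entries of `p`, does not increase the
loss (`exists_le_of_support`). Every value attained on `S'` thus dominates a value attained on the
top-`k` support, and the infima compare because the values are bounded below.
-/

open Finset Set Filter

/-- The loss as a part independent of the support and of `q`, plus a sum over the support. -/
lemma loss_eq {V : ℕ} (φ φ' : ℝ → ℝ) (hφ'0 : φ' 0 = 0) (p q : Fin V → ℝ) (S : Finset (Fin V)) :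
    (∑ i ∈ S, breg φ φ' (p i) (q i)) + ∑ i ∈ Sᶜ, breg φ φ' (p i) 0 =
      (∑ i, (φ (p i) - φ 0)) + ∑ i ∈ S, (φ 0 - φ (q i) - φ' (q i) * (p i - q i)) := by
  have h := Finset.sum_add_sum_compl S (fun i => φ (p i) - φ 0)
  have h2 : ∑ i ∈ Sᶜ, breg φ φ' (p i) 0 = ∑ i ∈ Sᶜ, (φ (p i) - φ 0) :=
    Finset.sum_congr rfl fun i _ => by simp [breg, hφ'0]
  have h3 : ∑ i ∈ S, breg φ φ' (p i) (q i) = ∑ i ∈ S, (φ (p i) - φ 0) +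
      ∑ i ∈ S, (φ 0 - φ (q i) - φ' (q i) * (p i - q i)) := by
    rw [← Finset.sum_add_distrib]
    exact Finset.sum_congr rfl fun i _ => by simp only [breg]; ring
  rw [h2, h3, ← h]
  ring

lemma sum_top {V k : ℕ} (hkV : k ≤ V) (F : Fin V → ℝ) :
    ∑ i ∈ Finset.univ.filter (fun i : Fin V => (i : ℕ) < k), F i =
      ∑ j : Fin k, F (Fin.castLE hkV j) := by
  have : Finset.univ.filter (fun i : Fin V => (i : ℕ) < k) =
      Finset.univ.map (Fin.castLEEmb hkV) := by
    ext i
    simp only [Finset.mem_filter, Finset.mem_univ, true_and, Finset.mem_map]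
    constructor
    · intro h
      exact ⟨⟨i, h⟩, rfl⟩
    · rintro ⟨j, rfl⟩
      exact j.2
  rw [this, Finset.sum_map]
  rfl

lemma sum_orderEmb {V k : ℕ} (S : Finset (Fin V)) (hS : S.card = k) (F : Fin V → ℝ) :
    ∑ i ∈ S, F i = ∑ j : Fin k, F (S.orderEmbOfFin hS j) := by
  conv_lhs => rw [← Finset.map_orderEmbOfFin_univ S hS]
  rw [Finset.sum_map]
  rfl

/-- Counting from `0`, the `n`-th smallest element of a subset of `Fin V` is at least `n`. -/
lemma le_orderEmb_s2 {V k : ℕ} (f : Fin k ↪o Fin V) (n : ℕ) (hn : n < k) :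
    n ≤ (f ⟨n, hn⟩ : ℕ) := by
  induction n with
  | zero => exact Nat.zero_le _
  | succ m ih =>
    have h1 := ih (by omega)
    have h2 : f ⟨m, by omega⟩ < f ⟨m + 1, hn⟩ := f.strictMono (by simp [Fin.lt_def])
    have h3 : (f ⟨m, by omega⟩ : ℕ) < (f ⟨m + 1, hn⟩ : ℕ) := h2
    omega

/-- Weights on `S'` can be moved to the top-`k` support without increasing the loss. -/
lemma exists_le_of_support {V k : ℕ} (p : Fin V → ℝ)
    (hsorted : ∀ i j : Fin V, i ≤ j → p j ≤ p i) (φ φ' : ℝ → ℝ) (hφ'0 : φ' 0 = 0)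
    (hpos : ∀ t ∈ Set.Icc (0:ℝ) 1, 0 ≤ φ' t) (S' : Finset (Fin V)) (hcard : S'.card = k)
    (q : Fin V → ℝ) (hq : ∀ i, q i ∈ Set.Icc (0:ℝ) 1) (hq1 : (∑ i ∈ S', q i) = 1) :
    ∃ q' : Fin V → ℝ, (∀ i, q' i ∈ Set.Icc (0:ℝ) 1) ∧
      (∑ i ∈ Finset.univ.filter (fun i : Fin V => (i : ℕ) < k), q' i) = 1 ∧
      (∑ i ∈ Finset.univ.filter (fun i : Fin V => (i : ℕ) < k), breg φ φ' (p i) (q' i)) +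
        ∑ i ∈ (Finset.univ.filter (fun i : Fin V => (i : ℕ) < k))ᶜ, breg φ φ' (p i) 0 ≤
      (∑ i ∈ S', breg φ φ' (p i) (q i)) + ∑ i ∈ S'ᶜ, breg φ φ' (p i) 0 := by
  have hkV : k ≤ V := by
    have := Finset.card_le_univ S'
    simpa [hcard] using this
  let f := S'.orderEmbOfFin hcard
  let q' : Fin V → ℝ := fun i => if h : (i : ℕ) < k then q (f ⟨i, h⟩) else 0
  have hq' : ∀ j : Fin k, q' (Fin.castLE hkV j) = q (f j) := fun j => by simp [q']
  refine ⟨q', fun i => ?_, ?_, ?_⟩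
  · by_cases h : (i : ℕ) < k
    · simpa only [q', h, dif_pos] using hq _
    · simp [q', h]
  · rw [sum_top hkV, ← hq1, sum_orderEmb S' hcard]
    exact Finset.sum_congr rfl fun j _ => hq' j
  · rw [loss_eq φ φ' hφ'0, loss_eq φ φ' hφ'0, sum_top hkV, sum_orderEmb S' hcard]
    refine add_le_add le_rfl (Finset.sum_le_sum fun j _ => ?_)
    rw [hq' j]
    have hle : p (f j) ≤ p (Fin.castLE hkV j) := hsorted _ _ (le_orderEmb_s2 f j j.2)
    have := mul_le_mul_of_nonneg_left hle (hpos _ (hq (f j)))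
    change _ ≤ φ 0 - φ (q (f j)) - φ' (q (f j)) * (p (f j) - q (f j))
    linarith

/-- Dual Bregman decoding is greedy under the elasticity condition.
Here `φ` is dual valid, continuously differentiable on `[0,1]` with `φ'(0) = 0`,
nondecreasing on `[0,1]`, and the elasticity `u(x) = x·φ''(x)/φ'(x)` is nondecreasing
on `(0,1]`. Then the top-`k` support minimizes the dual support loss. -/
theorem dual_bregman_decoding_is_greedy_elasticity
    (V k : ℕ) (hV : 1 ≤ V) (hk : 1 ≤ k)
    (p : Fin V → ℝ) (hp0 : ∀ i, p i ∈ Set.Icc (0:ℝ) 1) (hp1 : (∑ i, p i) = 1)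
    (hsorted : ∀ i j : Fin V, i ≤ j → p j ≤ p i)
    (φ φ' φ'' φ''' : ℝ → ℝ)
    (hd1 : ∀ t ∈ Set.Ioc (0:ℝ) 1, HasDerivWithinAt φ (φ' t) (Set.Ioc 0 1) t)
    (hd2 : ∀ t ∈ Set.Ioc (0:ℝ) 1, HasDerivWithinAt φ' (φ'' t) (Set.Ioc 0 1) t)
    (hd3 : ∀ t ∈ Set.Ioc (0:ℝ) 1, HasDerivWithinAt φ'' (φ''' t) (Set.Ioc 0 1) t)
    (hlim : Filter.Tendsto (fun t => t * φ'' t) (nhdsWithin 0 (Set.Ioi 0)) (nhds 0))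
    (hsc1 : ∀ t ∈ Set.Ioc (0:ℝ) 1, StrictConvexOn ℝ (Set.Icc t 1) (fun y => breg φ φ' t y))
    (hsc2 : StrictConvexOn ℝ (Set.Ioc 0 1) (fun y => breg φ φ' 0 y))
    (hC1 : ∀ t ∈ Set.Icc (0:ℝ) 1, HasDerivWithinAt φ (φ' t) (Set.Icc 0 1) t)
    (hC1cont : ContinuousOn φ' (Set.Icc 0 1))
    (hφ'0 : φ' 0 = 0)
    (hφmono : MonotoneOn φ (Set.Icc 0 1))
    (helas : MonotoneOn (fun t => t * φ'' t / φ' t) (Set.Ioc 0 1))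
    (S' : Finset (Fin V)) (hcard : S'.card = k) :
    dualLoss φ φ' p (Finset.univ.filter (fun i => (i : ℕ) < k)) ≤ dualLoss φ φ' p S' := by
  have hpos : ∀ t ∈ Set.Icc (0:ℝ) 1, 0 ≤ φ' t := fun t ht => by
    rw [← (hC1 t ht).derivWithin (uniqueDiffOn_Icc zero_lt_one t ht)]
    exact hφmono.derivWithin_nonneg
  obtain ⟨M, hM⟩ := isCompact_Icc.bddAbove_image hC1cont
  have hM' : ∀ t ∈ Set.Icc (0:ℝ) 1, φ' t ≤ M := fun t ht => hM ⟨t, ht, rfl⟩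
  unfold dualLoss
  refine le_csInf ?_ ?_
  · obtain ⟨a, ha⟩ : S'.Nonempty := Finset.card_pos.mp (by omega)
    -- a point mass on an element of `S'` is feasible
    refine ⟨_, fun i => if i = a then 1 else 0, fun i => ?_, ?_, rfl⟩
    · dsimp only
      split_ifs <;> simp
    · simp [ha]
  · rintro r ⟨q, hq, hq1, rfl⟩
    obtain ⟨q', hq', hq1', hle⟩ :=
      exists_le_of_support p hsorted φ φ' hφ'0 hpos S' hcard q hq hq1
    refine le_trans (csInf_le ?_ ⟨q', hq', hq1', rfl⟩) hle
    -- boundedness: on `[0,1]`, `φ ≤ φ 1` and `φ' y * (x - y) ≤ M`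
    refine ⟨(∑ i ∈ Finset.univ.filter (fun i : Fin V => (i : ℕ) < k), (φ (p i) - φ 1 - M)) +
      ∑ i ∈ (Finset.univ.filter (fun i : Fin V => (i : ℕ) < k))ᶜ, breg φ φ' (p i) 0, ?_⟩
    rintro _ ⟨s, hs, -, rfl⟩
    refine add_le_add (Finset.sum_le_sum fun i _ => ?_) le_rfl
    have h1 : φ (s i) ≤ φ 1 := hφmono (hs i) ⟨zero_le_one, le_rfl⟩ (hs i).2
    have h2 : φ' (s i) * (p i - s i) ≤ φ' (s i) * 1 :=
      mul_le_mul_of_nonneg_left (by linarith [(hp0 i).2, (hs i).1]) (hpos _ (hs i))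
    have h3 := hM' _ (hs i)
    unfold breg
    linarith
end

section
/- Let V ≥ 3, let p ∈ Δ_V have entries sorted in non-increasing order, let φ : [0,1] → ℝ be dual valid and continuously differentiable on [0,1] with φ'(0) = 0, and let λ ≥ 0. Define cost*(k) = min_{q ∈ Δ_k} [ Σ_{j=1}^k d_φ(p_j, q_j) + Σ_{j=k+1}^V d_φ(p_j, 0) ] + λk for k ∈ {1,…,V}. Then cost* is discretely convex in k: for every k ∈ {2,…,V−1}, cost*(k+1) − 2·cost*(k) + cost*(k−1) ≥ 0. -/
/-!
Fix `k`. Writing `m(p, ν)` for the minimum over `y ∈ [0,1]` of `d_φ(p, y) - ν y`, weak duality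
bounds the loss at every `n ≥ 1` from below by the Lagrangian value
`H n = ν + ∑_{j < n} m(p_j, ν) + ∑_{j ≥ n} d_φ(p_j, 0)`, for any multiplier `ν`.
For a suitable `ν ≥ 0` this bound is attained at `n = k`. Hence the second difference of the loss at
`k` is at least that of `H`, which is `g(p_{k+1}) - g(p_k)` (1-based indices) with
`g(p) = m(p, ν) - d_φ(p, 0) = min_y [φ 0 - φ y + φ'(y) (y - p) - ν y]`.
Since `φ' ≥ 0`, `g` is antitone, and the second difference is nonnegative because `p` is sorted.
The regularizer `λ k` is affine and does not contribute.

The multiplier is found by the intermediate value theorem. The derivative of `d_φ(p, ·)` is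
`G_p(y) = φ''(y) (y - p)`; it is nonpositive below `p`, and dual validity makes it positive and
strictly increasing on `(p, 1]`. Its generalized inverse `Q_p(ν)` (`exists_inverse`) is continuous in
`ν`, runs from `p` to `1`, and minimizes `y ↦ d_φ(p, y) - ν y` (`exists_minimizer_path`).
The sum `∑_{j < k} Q_{p_j}(ν)` is at most `1` at `ν = 0` and at least `1` for large `ν`.
-/

open Finset Set Filter

/-- The unregularized dual loss of keeping the top-`n` coordinates `{0,…,n−1}` of `p`:
the infimum over probability vectors supported on the first `n` coordinates of
`Σ_{j<n} d_φ(p_j, q_j) + Σ_{j≥n} d_φ(p_j, 0)`. -/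
noncomputable def dualTopLoss {V : ℕ} (φ φ' : ℝ → ℝ) (p : Fin V → ℝ) (n : ℕ) : ℝ :=
  sInf {r : ℝ | ∃ q : Fin V → ℝ, (∀ i, q i ∈ Set.Icc (0:ℝ) 1) ∧
    ((∑ i ∈ Finset.univ.filter (fun i : Fin V => (i : ℕ) < n), q i) = 1) ∧
    r = (∑ i ∈ Finset.univ.filter (fun i : Fin V => (i : ℕ) < n), breg φ φ' (p i) (q i)) +
        ∑ i ∈ Finset.univ.filter (fun i : Fin V => n ≤ (i : ℕ)), breg φ φ' (p i) 0}

/-- The `ℓ₀`-regularized dual cost `cost*(n) = min_{q ∈ Δ_n} D_φ(p,(q,0)) + λ·n`. -/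
noncomputable def dualCost {V : ℕ} (φ φ' : ℝ → ℝ) (p : Fin V → ℝ) (lam : ℝ) (n : ℕ) : ℝ :=
  dualTopLoss φ φ' p n + lam * (n : ℝ)

/-- Generalized inverse of a positive, strictly increasing, possibly discontinuous function `G`
on `(p, 1]`. Monotone with range all of `[p, 1]`, it has no jumps, hence is continuous. -/
lemma exists_inverse (p : ℝ) (hp : p ≤ 1) (G : ℝ → ℝ)
    (hmono : StrictMonoOn G (Set.Ioc p 1)) (hpos : ∀ y ∈ Set.Ioc p 1, 0 < G y) :
    ∃ Q : ℝ → ℝ, Continuous Q ∧ Q 0 = p ∧ (∀ ν, Q ν ∈ Set.Icc p 1) ∧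
      (∃ ν, 0 ≤ ν ∧ ∀ μ, ν ≤ μ → Q μ = 1) ∧
      (∀ ν y, p < y → y < Q ν → G y ≤ ν) ∧ (∀ ν y, Q ν < y → y ≤ 1 → ν ≤ G y) := by
  let S : ℝ → Set ℝ := fun ν => insert p {y | y ∈ Set.Ioc p 1 ∧ G y ≤ ν}
  have hub : ∀ ν, ∀ y ∈ S ν, y ≤ 1 := by
    rintro ν y (rfl | ⟨h, -⟩)
    · exact hp
    · exact h.2
  have hbdd : ∀ ν, BddAbove (S ν) := fun ν => ⟨1, hub ν⟩
  have hne : ∀ ν, (S ν).Nonempty := fun ν => ⟨p, Set.mem_insert _ _⟩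
  let Q : ℝ → ℝ := fun ν => sSup (S ν)
  have hQ : ∀ ν, Q ν ∈ Set.Icc p 1 := fun ν =>
    ⟨le_csSup (hbdd ν) (Set.mem_insert _ _), csSup_le (hne ν) (hub ν)⟩
  have hQ0 : Q 0 = p := by
    apply le_antisymm _ (hQ 0).1
    apply csSup_le (hne 0)
    rintro y (rfl | ⟨h, h'⟩)
    · exact le_rfl
    · exact absurd (hpos y h) (not_lt.mpr h')
  have hQG : ∀ y ∈ Set.Ioc p 1, Q (G y) = y := by
    intro y hy
    apply le_antisymm
    · apply csSup_le (hne _)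
      rintro z (rfl | ⟨h, h'⟩)
      · exact hy.1.le
      · exact (hmono.le_iff_le h hy).1 h'
    · exact le_csSup (hbdd _) (Set.mem_insert_of_mem _ ⟨hy, le_rfl⟩)
  have hQmono : Monotone Q := by
    intro a b hab
    apply csSup_le_csSup (hbdd b) (hne a)
    rintro y (rfl | ⟨h, h'⟩)
    · exact Set.mem_insert _ _
    · exact Set.mem_insert_of_mem _ ⟨h, h'.trans hab⟩
  have hcont : Continuous Q := by
    let R : ℝ → Set.Icc p 1 := fun ν => ⟨Q ν, hQ ν⟩
    have hR : Continuous R := by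
      apply Monotone.continuous_of_surjective
      · exact fun a b hab => hQmono hab
      · rintro ⟨y, hy⟩
        rcases hy.1.eq_or_lt with h | h
        · exact ⟨0, Subtype.ext (hQ0.trans h)⟩
        · exact ⟨G y, Subtype.ext (hQG y ⟨h, hy.2⟩)⟩
    exact continuous_subtype_val.comp hR
  refine ⟨Q, hcont, hQ0, hQ, ?_, ?_, ?_⟩
  · obtain ⟨ν, hν, h⟩ : ∃ ν, 0 ≤ ν ∧ Q ν = 1 := by
      rcases hp.eq_or_lt with h | h
      · exact ⟨0, le_rfl, hQ0.trans h⟩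
      · exact ⟨G 1, (hpos 1 ⟨h, le_rfl⟩).le, hQG 1 ⟨h, le_rfl⟩⟩
    exact ⟨ν, hν, fun μ hμ => le_antisymm (hQ μ).2 (h ▸ hQmono hμ)⟩
  · intro ν y hpy hy
    obtain ⟨z, hz, hyz⟩ := exists_lt_of_lt_csSup (hne ν) hy
    rcases hz with rfl | ⟨h, h'⟩
    · exact absurd hpy hyz.not_gt
    · exact (hmono ⟨hpy, hyz.le.trans h.2⟩ h hyz).le.trans h'
  · intro ν y hy hy1
    by_contra hlt
    exact absurd (le_csSup (hbdd ν) (Set.mem_insert_of_mem _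
      ⟨⟨(hQ ν).1.trans_lt hy, hy1⟩, (not_le.mp hlt).le⟩)) (not_le.mpr hy)

lemma hasDerivAt_breg {φ φ' φ'' : ℝ → ℝ}
    (hd1 : ∀ t ∈ Set.Ioc (0:ℝ) 1, HasDerivWithinAt φ (φ' t) (Set.Ioc 0 1) t)
    (hd2 : ∀ t ∈ Set.Ioc (0:ℝ) 1, HasDerivWithinAt φ' (φ'' t) (Set.Ioc 0 1) t)
    (p t : ℝ) (ht : t ∈ Set.Ioc (0:ℝ) 1) :
    HasDerivWithinAt (fun y => breg φ φ' p y) (φ'' t * (t - p)) (Set.Ioc 0 1) t := by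
  have h := ((hd1 t ht).const_sub (φ p)).sub
    ((hd2 t ht).mul ((hasDerivWithinAt_id t (Set.Ioc 0 1)).const_sub p))
  refine h.congr_deriv ?_
  simp only [id]
  ring

/-- A strictly convex function has a strictly increasing derivative; `s` may be closed and the
derivative one-sided at its endpoints. -/
lemma strictMonoOn_of_hasDerivWithinAt {s : Set ℝ} {f g : ℝ → ℝ} (hf : StrictConvexOn ℝ s f)
    (hg : ∀ t ∈ s, HasDerivWithinAt f (g t) s t) : StrictMonoOn g s := by
  intro a ha b hb hab
  exact (hf.lt_slope_of_hasDerivWithinAt ha hb hab (hg a ha)).trans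
    (hf.slope_lt_of_hasDerivWithinAt ha hb hab (hg b hb))

/-- The derivative `y φ''(y)` of `d_φ(0, ·)` is strictly increasing with limit `0` at `0⁺`. -/
lemma second_deriv_pos {φ φ' φ'' : ℝ → ℝ}
    (hd1 : ∀ t ∈ Set.Ioc (0:ℝ) 1, HasDerivWithinAt φ (φ' t) (Set.Ioc 0 1) t)
    (hd2 : ∀ t ∈ Set.Ioc (0:ℝ) 1, HasDerivWithinAt φ' (φ'' t) (Set.Ioc 0 1) t)
    (hlim : Filter.Tendsto (fun t => t * φ'' t) (nhdsWithin 0 (Set.Ioi 0)) (nhds 0))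
    (hsc2 : StrictConvexOn ℝ (Set.Ioc 0 1) (fun y => breg φ φ' 0 y))
    (t : ℝ) (ht : t ∈ Set.Ioc (0:ℝ) 1) : 0 < φ'' t := by
  have hm := strictMonoOn_of_hasDerivWithinAt hsc2 (hasDerivAt_breg hd1 hd2 0)
  have hle : ∀ s ∈ Set.Ioc (0:ℝ) 1, 0 ≤ φ'' s * (s - 0) := by
    intro s hs
    apply le_of_tendsto hlim
    filter_upwards [Ioo_mem_nhdsGT hs.1] with r hr
    have := hm ⟨hr.1, hr.2.le.trans hs.2⟩ hs hr.2
    simp only [sub_zero] at this ⊢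
    linarith
  have hh : t / 2 ∈ Set.Ioc (0:ℝ) 1 := ⟨by linarith [ht.1], by linarith [ht.1, ht.2]⟩
  have h : 0 < φ'' t * (t - 0) := (hle _ hh).trans_lt (hm hh ht (by linarith [ht.1]))
  rw [sub_zero] at h
  exact pos_of_mul_pos_left h ht.1.le

/-- For each `p`, minimizers of `y ↦ d_φ(p, y) - ν y` over `[0, 1]` can be chosen continuously
in `ν ≥ 0`, starting at `p` and eventually equal to `1`. -/
lemma exists_minimizer_path {φ φ' φ'' : ℝ → ℝ}
    (hd1 : ∀ t ∈ Set.Ioc (0:ℝ) 1, HasDerivWithinAt φ (φ' t) (Set.Ioc 0 1) t)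
    (hd2 : ∀ t ∈ Set.Ioc (0:ℝ) 1, HasDerivWithinAt φ' (φ'' t) (Set.Ioc 0 1) t)
    (hlim : Filter.Tendsto (fun t => t * φ'' t) (nhdsWithin 0 (Set.Ioi 0)) (nhds 0))
    (hsc1 : ∀ t ∈ Set.Ioc (0:ℝ) 1, StrictConvexOn ℝ (Set.Icc t 1) (fun y => breg φ φ' t y))
    (hsc2 : StrictConvexOn ℝ (Set.Ioc 0 1) (fun y => breg φ φ' 0 y))
    (hC1 : ∀ t ∈ Set.Icc (0:ℝ) 1, HasDerivWithinAt φ (φ' t) (Set.Icc 0 1) t)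
    (hC1cont : ContinuousOn φ' (Set.Icc 0 1))
    (p : ℝ) (hp : p ∈ Set.Icc (0:ℝ) 1) :
    ∃ Q : ℝ → ℝ, Continuous Q ∧ Q 0 = p ∧ (∀ ν, Q ν ∈ Set.Icc (0:ℝ) 1) ∧
      (∃ ν, 0 ≤ ν ∧ ∀ μ, ν ≤ μ → Q μ = 1) ∧
      ∀ ν, 0 ≤ ν → ∀ y ∈ Set.Icc (0:ℝ) 1,
        breg φ φ' p (Q ν) - ν * Q ν ≤ breg φ φ' p y - ν * y := by
  have hpos := second_deriv_pos hd1 hd2 hlim hsc2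
  have hmono : StrictMonoOn (fun y => φ'' y * (y - p)) (Set.Ioc p 1) := by
    rcases hp.1.eq_or_lt with h | h
    · subst h
      exact strictMonoOn_of_hasDerivWithinAt hsc2 (hasDerivAt_breg hd1 hd2 0)
    · refine (strictMonoOn_of_hasDerivWithinAt (hsc1 p ⟨h, hp.2⟩) ?_).mono Set.Ioc_subset_Icc_self
      intro t ht
      exact (hasDerivAt_breg hd1 hd2 p t ⟨h.trans_le ht.1, ht.2⟩).mono
        fun y hy => ⟨h.trans_le hy.1, hy.2⟩
  obtain ⟨Q, hQc, hQ0, hQ, hQ1, hlow, hhigh⟩ := exists_inverse p hp.2 _ hmono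
    (fun y hy => mul_pos (hpos y ⟨hp.1.trans_lt hy.1, hy.2⟩) (sub_pos.2 hy.1))
  have hQI : ∀ ν, Q ν ∈ Set.Icc (0:ℝ) 1 := fun ν => ⟨hp.1.trans (hQ ν).1, (hQ ν).2⟩
  refine ⟨Q, hQc, hQ0, hQI, hQ1, ?_⟩
  intro ν hν y hy
  let F : ℝ → ℝ := fun y => breg φ φ' p y - ν * y
  have hFc : ContinuousOn F (Set.Icc 0 1) := by
    have hφ : ContinuousOn φ (Set.Icc 0 1) := fun t ht => (hC1 t ht).continuousWithinAt
    simp only [F, breg]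
    fun_prop
  have hFd : ∀ t ∈ Set.Ioo (0:ℝ) 1, HasDerivAt F (φ'' t * (t - p) - ν) t := by
    intro t ht
    have h := (hasDerivAt_breg hd1 hd2 p t ⟨ht.1, ht.2.le⟩).hasDerivAt
      (Ioc_mem_nhds ht.1 ht.2)
    exact (h.sub ((hasDerivAt_id t).const_mul ν)).congr_deriv (by ring)
  rcases le_total y (Q ν) with h | h
  · have hanti : AntitoneOn F (Set.Icc 0 (Q ν)) := by
      apply antitoneOn_of_hasDerivWithinAt_nonpos (f' := fun t => φ'' t * (t - p) - ν)
        (convex_Icc _ _)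
        (hFc.mono (Set.Icc_subset_Icc_right (hQI ν).2))
      · intro t ht
        rw [interior_Icc] at ht
        exact (hFd t ⟨ht.1, ht.2.trans_le (hQI ν).2⟩).hasDerivWithinAt
      · intro t ht
        rw [interior_Icc] at ht
        rcases le_or_gt t p with htp | htp
        · have := mul_nonneg (hpos t ⟨ht.1, ht.2.le.trans (hQI ν).2⟩).le (sub_nonneg.2 htp)
          nlinarith
        · exact sub_nonpos.2 (hlow ν t htp ht.2)
    exact hanti ⟨hy.1, h⟩ ⟨(hQI ν).1, le_rfl⟩ h
  · have hmon : MonotoneOn F (Set.Icc (Q ν) 1) := by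
      apply monotoneOn_of_hasDerivWithinAt_nonneg (f' := fun t => φ'' t * (t - p) - ν)
        (convex_Icc _ _)
        (hFc.mono (Set.Icc_subset_Icc_left (hQI ν).1))
      · intro t ht
        rw [interior_Icc] at ht
        exact (hFd t ⟨(hQI ν).1.trans_lt ht.1, ht.2⟩).hasDerivWithinAt
      · intro t ht
        rw [interior_Icc] at ht
        exact sub_nonneg.2 (hhigh ν t ht.1 ht.2.le)
    exact hmon ⟨le_rfl, (hQI ν).2⟩ ⟨h, hy.2⟩ h

lemma deriv_nonneg_of_dual_valid_s4 {φ' φ'' : ℝ → ℝ}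
    (hd2 : ∀ t ∈ Set.Ioc (0:ℝ) 1, HasDerivWithinAt φ' (φ'' t) (Set.Ioc 0 1) t)
    (hpos : ∀ t ∈ Set.Ioc (0:ℝ) 1, 0 < φ'' t)
    (hC1cont : ContinuousOn φ' (Set.Icc 0 1)) (hφ'0 : φ' 0 = 0)
    (y : ℝ) (hy : y ∈ Set.Icc (0:ℝ) 1) : 0 ≤ φ' y := by
  have hmon : MonotoneOn φ' (Set.Icc 0 1) := by
    apply monotoneOn_of_hasDerivWithinAt_nonneg (f' := φ'') (convex_Icc _ _) hC1cont
    · intro t ht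
      rw [interior_Icc] at ht ⊢
      exact (hd2 t ⟨ht.1, ht.2.le⟩).mono Set.Ioo_subset_Ioc_self
    · intro t ht
      rw [interior_Icc] at ht
      exact (hpos t ⟨ht.1, ht.2.le⟩).le
  rw [← hφ'0]
  exact hmon ⟨le_rfl, zero_le_one⟩ hy hy.1

/-- The Lagrangian bound `ν + ∑_{j < n} m_j + ∑_{j ≥ n} e_j`. -/
noncomputable def lagr {V : ℕ} (ν : ℝ) (m e : Fin V → ℝ) (n : ℕ) : ℝ :=
  ν + (∑ i ∈ Finset.univ.filter (fun i : Fin V => (i : ℕ) < n), m i) +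
    ∑ i ∈ Finset.univ.filter (fun i : Fin V => n ≤ (i : ℕ)), e i

lemma lagr_succ {V : ℕ} (ν : ℝ) (m e : Fin V → ℝ) (n : ℕ) (hn : n < V) :
    lagr ν m e (n + 1) = lagr ν m e n + m ⟨n, hn⟩ - e ⟨n, hn⟩ := by
  have h1 : Finset.univ.filter (fun i : Fin V => (i : ℕ) < n + 1) =
      insert ⟨n, hn⟩ (Finset.univ.filter (fun i : Fin V => (i : ℕ) < n)) := by
    ext i
    simp [Fin.ext_iff]
    omega
  have h2 : Finset.univ.filter (fun i : Fin V => n ≤ (i : ℕ)) =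
      insert ⟨n, hn⟩ (Finset.univ.filter (fun i : Fin V => n + 1 ≤ (i : ℕ))) := by
    ext i
    simp [Fin.ext_iff]
    omega
  unfold lagr
  rw [h1, h2, Finset.sum_insert (by simp), Finset.sum_insert (by simp)]
  ring

/-- Weak duality, stated for each element of the set whose infimum is the loss. -/
lemma lagr_le_of_feasible {V : ℕ} {φ φ' : ℝ → ℝ} {p : Fin V → ℝ} {ν : ℝ} {m : Fin V → ℝ}
    (hm : ∀ i, ∀ y ∈ Set.Icc (0:ℝ) 1, m i ≤ breg φ φ' (p i) y - ν * y) (n : ℕ)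
    (q : Fin V → ℝ) (hq : ∀ i, q i ∈ Set.Icc (0:ℝ) 1)
    (hq1 : (∑ i ∈ Finset.univ.filter (fun i : Fin V => (i : ℕ) < n), q i) = 1) :
    lagr ν m (fun i => breg φ φ' (p i) 0) n ≤
      (∑ i ∈ Finset.univ.filter (fun i : Fin V => (i : ℕ) < n), breg φ φ' (p i) (q i)) +
        ∑ i ∈ Finset.univ.filter (fun i : Fin V => n ≤ (i : ℕ)), breg φ φ' (p i) 0 := by
  have h := Finset.sum_le_sum
    (s := Finset.univ.filter (fun i : Fin V => (i : ℕ) < n)) (fun i _ => hm i (q i) (hq i))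
  rw [Finset.sum_sub_distrib, ← Finset.mul_sum, hq1] at h
  unfold lagr
  linarith

lemma lagr_le_dualTopLoss {V : ℕ} {φ φ' : ℝ → ℝ} {p : Fin V → ℝ} {ν : ℝ} {m : Fin V → ℝ}
    (hm : ∀ i, ∀ y ∈ Set.Icc (0:ℝ) 1, m i ≤ breg φ φ' (p i) y - ν * y) (n : ℕ)
    (hn : 1 ≤ n) (hV : 0 < V) :
    lagr ν m (fun i => breg φ φ' (p i) 0) n ≤ dualTopLoss φ φ' p n := by
  apply le_csInf
  · refine ⟨_, fun i => if i = ⟨0, hV⟩ then 1 else 0, ?_, ?_, rfl⟩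
    · intro i
      dsimp only
      split_ifs <;> simp
    · rw [Finset.sum_ite_eq', if_pos]
      simp
      omega
  · rintro r ⟨q, hq, hq1, rfl⟩
    exact lagr_le_of_feasible hm n q hq hq1

/-- Discrete convexity of the dual cost. For `V ≥ 3`, `p ∈ Δ_V` sorted in
non-increasing order, a dual valid `φ` that is continuously differentiable on `[0,1]`
with `φ'(0) = 0`, and `λ ≥ 0`, the regularized dual cost satisfies
`cost*(k+1) − 2·cost*(k) + cost*(k−1) ≥ 0` for every `k ∈ {2,…,V−1}`. -/
theorem dual_cost_discretely_convex
    (V : ℕ) (hV : 3 ≤ V)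
    (p : Fin V → ℝ) (hp0 : ∀ i, p i ∈ Set.Icc (0:ℝ) 1) (hp1 : (∑ i, p i) = 1)
    (hsorted : ∀ i j : Fin V, i ≤ j → p j ≤ p i)
    (φ φ' φ'' φ''' : ℝ → ℝ)
    (hd1 : ∀ t ∈ Set.Ioc (0:ℝ) 1, HasDerivWithinAt φ (φ' t) (Set.Ioc 0 1) t)
    (hd2 : ∀ t ∈ Set.Ioc (0:ℝ) 1, HasDerivWithinAt φ' (φ'' t) (Set.Ioc 0 1) t)
    (hd3 : ∀ t ∈ Set.Ioc (0:ℝ) 1, HasDerivWithinAt φ'' (φ''' t) (Set.Ioc 0 1) t)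
    (hlim : Filter.Tendsto (fun t => t * φ'' t) (nhdsWithin 0 (Set.Ioi 0)) (nhds 0))
    (hsc1 : ∀ t ∈ Set.Ioc (0:ℝ) 1, StrictConvexOn ℝ (Set.Icc t 1) (fun y => breg φ φ' t y))
    (hsc2 : StrictConvexOn ℝ (Set.Ioc 0 1) (fun y => breg φ φ' 0 y))
    (hC1 : ∀ t ∈ Set.Icc (0:ℝ) 1, HasDerivWithinAt φ (φ' t) (Set.Icc 0 1) t)
    (hC1cont : ContinuousOn φ' (Set.Icc 0 1))
    (hφ'0 : φ' 0 = 0)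
    (lam : ℝ) (hlam : 0 ≤ lam)
    (k : ℕ) (hk2 : 2 ≤ k) (hkV : k + 1 ≤ V) :
    0 ≤ dualCost φ φ' p lam (k + 1) - 2 * dualCost φ φ' p lam k
        + dualCost φ φ' p lam (k - 1) := by
  choose Q hQc hQ0 hQI hQ1 hQm using fun i =>
    exists_minimizer_path hd1 hd2 hlim hsc1 hsc2 hC1 hC1cont (p i) (hp0 i)
  have hφ' := deriv_nonneg_of_dual_valid_s4 hd2 (second_deriv_pos hd1 hd2 hlim hsc2) hC1cont hφ'0
  have hV0 : 0 < V := by omega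
  obtain ⟨ν, hν, hsum⟩ : ∃ ν, 0 ≤ ν ∧
      ∑ i ∈ Finset.univ.filter (fun i : Fin V => (i : ℕ) < k), Q i ν = 1 := by
    obtain ⟨b, hb, hb1⟩ := hQ1 ⟨0, hV0⟩
    have hc : ContinuousOn
        (fun ν => ∑ i ∈ Finset.univ.filter (fun i : Fin V => (i : ℕ) < k), Q i ν)
        (Set.Icc 0 b) :=
      (continuous_finsetSum _ fun i _ => hQc i).continuousOn
    obtain ⟨ν, hν, h⟩ := intermediate_value_Icc hb hc (show (1:ℝ) ∈ _ from ⟨by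
      simp only [hQ0]
      rw [← hp1]
      exact Finset.sum_le_sum_of_subset_of_nonneg (Finset.subset_univ _)
        fun i _ _ => (hp0 i).1, by
      -- The coordinate `0` alone already contributes `1` at `ν = b`.
      rw [← hb1 b le_rfl]
      exact Finset.single_le_sum (f := fun i => Q i b) (fun i _ => (hQI i b).1)
        (Finset.mem_filter.2 ⟨Finset.mem_univ _, show 0 < k by omega⟩)⟩)
    exact ⟨ν, hν.1, h⟩
  let m : Fin V → ℝ := fun i => breg φ φ' (p i) (Q i ν) - ν * Q i ν
  have hm : ∀ i, ∀ y ∈ Set.Icc (0:ℝ) 1, m i ≤ breg φ φ' (p i) y - ν * y :=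
    fun i y hy => hQm i ν hν y hy
  have hlo := lagr_le_dualTopLoss hm (k - 1) (by omega) hV0
  have hhi := lagr_le_dualTopLoss hm (k + 1) (by omega) hV0
  have hmid : dualTopLoss φ φ' p k ≤ lagr ν m (fun i => breg φ φ' (p i) 0) k := by
    apply csInf_le
    · refine ⟨lagr ν m (fun i => breg φ φ' (p i) 0) k, ?_⟩
      rintro r ⟨q, hq, hq1, rfl⟩
      exact lagr_le_of_feasible hm k q hq hq1
    · refine ⟨fun i => Q i ν, fun i => hQI i ν, hsum, ?_⟩
      simp only [lagr, m]
      rw [Finset.sum_sub_distrib, ← Finset.mul_sum, hsum]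
      ring
  obtain ⟨l, rfl⟩ : ∃ l, k = l + 1 := ⟨k - 1, by omega⟩
  simp only [Nat.add_sub_cancel] at hlo ⊢
  have hs1 := lagr_succ ν m (fun i => breg φ φ' (p i) 0) l (by omega)
  have hs2 := lagr_succ ν m (fun i => breg φ φ' (p i) 0) (l + 1) (by omega)
  -- The minimizer for the smaller entry `p b` is a competitor for the larger entry `p a`.
  have key : ∀ a b : Fin V, a ≤ b →
      m a - breg φ φ' (p a) 0 ≤ m b - breg φ φ' (p b) 0 := by
    intro a b hab
    have h1 := hm a (Q b ν) (hQI b ν)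
    have h2 := mul_nonneg (hφ' _ (hQI b ν)) (sub_nonneg.2 (hsorted a b hab))
    simp only [m, breg, hφ'0] at h1 ⊢
    nlinarith
  have hkey := key ⟨l, by omega⟩ ⟨l + 1, by omega⟩ (by simp)
  unfold dualCost
  push_cast
  linarith
end

section
/- Let φ : [0,1] → ℝ be dual valid and continuously differentiable on [0,1], let k ≥ 1, and let x ∈ [0,1]^k satisfy 0 < Σᵢ xᵢ < 1. Then the dual Bregman projection problem min_{q ∈ Δ_k} Σᵢ d_φ(xᵢ, qᵢ) has a unique minimizer q*; moreover every coordinate satisfies q*ᵢ ∈ (xᵢ, 1], and there exists a single Lagrange multiplier ν* > 0 such that φ''(q*ᵢ)·(q*ᵢ − xᵢ) = ν* for every i ∈ {1,…,k}. -/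
/-!
Write `f_x(y) = d_φ(x, y)`. On `(0,1]` its derivative is `φ''(y)(y - x)`. For `0 < t < y` the
strictly convex function `f_t` on `[t,1]` has derivative `0` at `t`, so its derivative at `y` is
positive; hence `φ'' > 0` on `(0,1]` (`snd_deriv_pos`). Consequently `f_x` strictly decreases on
`[0,x]` and strictly increases on `[x,1]`.

A minimizer exists by compactness, since `φ'` is continuous on `[0,1]`. Everything else comes from
moving a small mass `ε` from a coordinate `j` to a coordinate `i` (`transfer_le`), whose first-order
form is `f_{x_j}'(q_j) ≤ f_{x_i}'(q_i)` at a minimizer `q` (`deriv_le_of_transfer`). As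
`∑ x < 1 = ∑ q`, some `j` has `q_j > x_j`.

* A coordinate with `q_i < x_i` is excluded by monotonicity alone. (No derivative is used: at
  `q_i = 0 < x_i` it may be infinite.)
* A coordinate with `q_i = x_i` is excluded because the derivative of `f_{x_i}` there is `0`, while
  that of `f_{x_j}` at `q_j` is positive. If `x_i = 0`, this vanishing is the condition
  `t φ''(t) → 0`.
* Now `q_i > x_i` for all `i`, and the first-order inequality in both directions shows that all
  the derivatives `φ''(q_i)(q_i - x_i)` coincide.

Every minimizer thus lies in the product of the intervals `(x_i, 1]`, where the objective is
strictly convex, which gives uniqueness.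
-/

open Finset Set Filter

/-- The probability simplex `Δ_k = {q ∈ [0,1]^k : Σ qᵢ = 1}`. -/
def probSimplex (k : ℕ) : Set (Fin k → ℝ) :=
  {q | (∀ i, q i ∈ Set.Icc (0:ℝ) 1) ∧ (∑ i, q i) = 1}

section Bregman

variable {φ φ' φ'' : ℝ → ℝ}

lemma breg_hasDerivWithinAt
    (hd1 : ∀ t ∈ Set.Ioc (0:ℝ) 1, HasDerivWithinAt φ (φ' t) (Set.Ioc 0 1) t)
    (hd2 : ∀ t ∈ Set.Ioc (0:ℝ) 1, HasDerivWithinAt φ' (φ'' t) (Set.Ioc 0 1) t)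
    (x : ℝ) {y : ℝ} (hy : y ∈ Set.Ioc (0:ℝ) 1) :
    HasDerivWithinAt (breg φ φ' x) (φ'' y * (y - x)) (Set.Icc 0 1) y := by
  have h : HasDerivWithinAt (breg φ φ' x) (φ'' y * (y - x)) (Set.Ioc 0 1) y := by
    have h3 : HasDerivWithinAt (fun y : ℝ => x - y) (-1) (Set.Ioc 0 1) y := by
      simpa using (hasDerivWithinAt_id y (Set.Ioc (0:ℝ) 1)).const_sub x
    have := ((hd1 y hy).const_sub (φ x)).sub ((hd2 y hy).mul h3)
    refine this.congr_deriv ?_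
    ring
  apply h.mono_of_mem_nhdsWithin
  filter_upwards [self_mem_nhdsWithin, mem_nhdsWithin_of_mem_nhds (Ioi_mem_nhds hy.1)] with z hz hz'
  exact ⟨hz', hz.2⟩

lemma breg_continuousOn
    (hC1 : ∀ t ∈ Set.Icc (0:ℝ) 1, HasDerivWithinAt φ (φ' t) (Set.Icc 0 1) t)
    (hC1cont : ContinuousOn φ' (Set.Icc 0 1)) (x : ℝ) :
    ContinuousOn (breg φ φ' x) (Set.Icc 0 1) := by
  have hφ : ContinuousOn φ (Set.Icc 0 1) := fun t ht => (hC1 t ht).continuousWithinAt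
  unfold breg
  fun_prop

/-- The vanishing of `t φ''(t)` at `0` makes the right derivative of `d_φ(0, ·)` at `0` zero. -/
lemma breg_zero_hasDerivWithinAt
    (hd1 : ∀ t ∈ Set.Ioc (0:ℝ) 1, HasDerivWithinAt φ (φ' t) (Set.Ioc 0 1) t)
    (hd2 : ∀ t ∈ Set.Ioc (0:ℝ) 1, HasDerivWithinAt φ' (φ'' t) (Set.Ioc 0 1) t)
    (hlim : Filter.Tendsto (fun t => t * φ'' t) (nhdsWithin 0 (Set.Ioi 0)) (nhds 0))
    (hC1 : ∀ t ∈ Set.Icc (0:ℝ) 1, HasDerivWithinAt φ (φ' t) (Set.Icc 0 1) t)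
    (hC1cont : ContinuousOn φ' (Set.Icc 0 1)) :
    HasDerivWithinAt (breg φ φ' 0) 0 (Set.Icc 0 1) 0 := by
  have hder : ∀ y ∈ Set.Ioo (0:ℝ) 1, HasDerivAt (breg φ φ' 0) (φ'' y * (y - 0)) y := fun y hy =>
    (breg_hasDerivWithinAt hd1 hd2 0 ⟨hy.1, hy.2.le⟩).hasDerivAt (Icc_mem_nhds hy.1 hy.2)
  refine (hasDerivWithinAt_Ici_of_tendsto_deriv (s := Set.Ioo 0 1)
    (fun y hy => (hder y hy).differentiableAt.differentiableWithinAt) ?_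
    (Ioo_mem_nhdsGT one_pos) ?_).mono Set.Icc_subset_Ici_self
  · exact (breg_continuousOn hC1 hC1cont 0 0 (by simp)).mono Set.Ioo_subset_Icc_self
  · refine hlim.congr' ?_
    filter_upwards [Ioo_mem_nhdsGT (one_pos : (0:ℝ) < 1)] with y hy
    rw [(hder y hy).deriv]
    ring

lemma snd_deriv_pos
    (hd1 : ∀ t ∈ Set.Ioc (0:ℝ) 1, HasDerivWithinAt φ (φ' t) (Set.Ioc 0 1) t)
    (hd2 : ∀ t ∈ Set.Ioc (0:ℝ) 1, HasDerivWithinAt φ' (φ'' t) (Set.Ioc 0 1) t)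
    (hsc1 : ∀ t ∈ Set.Ioc (0:ℝ) 1, StrictConvexOn ℝ (Set.Icc t 1) (fun y => breg φ φ' t y))
    {y : ℝ} (hy : y ∈ Set.Ioc (0:ℝ) 1) : 0 < φ'' y := by
  obtain ⟨h0, h1⟩ := hy
  have ht : y / 2 ∈ Set.Ioc (0:ℝ) 1 := ⟨by linarith, by linarith⟩
  have hlt : y / 2 < y := by linarith
  have hsub : Set.Icc (y / 2) 1 ⊆ Set.Icc 0 1 := Set.Icc_subset_Icc_left ht.1.le
  have hc := hsc1 _ ht
  have ha := (breg_hasDerivWithinAt hd1 hd2 (y / 2) ht).mono hsub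
  have hb := (breg_hasDerivWithinAt hd1 hd2 (y / 2) ⟨h0, h1⟩).mono hsub
  have hma : y / 2 ∈ Set.Icc (y / 2) 1 := ⟨le_rfl, ht.2⟩
  have hmb : y ∈ Set.Icc (y / 2) 1 := ⟨hlt.le, h1⟩
  have e1 := hc.lt_slope_of_hasDerivWithinAt hma hmb hlt ha
  have e2 := hc.slope_lt_of_hasDerivWithinAt hma hmb hlt hb
  have e3 : 0 < φ'' y * (y - y / 2) := by
    have := e1.trans e2
    simpa using this
  exact pos_of_mul_pos_left e3 (by linarith)

lemma breg_strictMonoOn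
    (hd1 : ∀ t ∈ Set.Ioc (0:ℝ) 1, HasDerivWithinAt φ (φ' t) (Set.Ioc 0 1) t)
    (hd2 : ∀ t ∈ Set.Ioc (0:ℝ) 1, HasDerivWithinAt φ' (φ'' t) (Set.Ioc 0 1) t)
    (hpos : ∀ y ∈ Set.Ioc (0:ℝ) 1, 0 < φ'' y)
    (hcont : ∀ x, ContinuousOn (breg φ φ' x) (Set.Icc 0 1))
    {x : ℝ} (hx : 0 ≤ x) : StrictMonoOn (breg φ φ' x) (Set.Icc x 1) := by
  refine strictMonoOn_of_deriv_pos (convex_Icc _ _)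
    ((hcont x).mono (Set.Icc_subset_Icc_left hx)) fun y hy => ?_
  rw [interior_Icc] at hy
  have h0 : 0 < y := hx.trans_lt hy.1
  rw [((breg_hasDerivWithinAt hd1 hd2 x ⟨h0, hy.2.le⟩).hasDerivAt (Icc_mem_nhds h0 hy.2)).deriv]
  exact mul_pos (hpos y ⟨h0, hy.2.le⟩) (sub_pos.2 hy.1)

lemma breg_strictAntiOn
    (hd1 : ∀ t ∈ Set.Ioc (0:ℝ) 1, HasDerivWithinAt φ (φ' t) (Set.Ioc 0 1) t)
    (hd2 : ∀ t ∈ Set.Ioc (0:ℝ) 1, HasDerivWithinAt φ' (φ'' t) (Set.Ioc 0 1) t)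
    (hpos : ∀ y ∈ Set.Ioc (0:ℝ) 1, 0 < φ'' y)
    (hcont : ∀ x, ContinuousOn (breg φ φ' x) (Set.Icc 0 1))
    {x : ℝ} (hx : x ≤ 1) : StrictAntiOn (breg φ φ' x) (Set.Icc 0 x) := by
  refine strictAntiOn_of_deriv_neg (convex_Icc _ _)
    ((hcont x).mono (Set.Icc_subset_Icc_right hx)) fun y hy => ?_
  rw [interior_Icc] at hy
  have h1 : y < 1 := hy.2.trans_le hx
  rw [((breg_hasDerivWithinAt hd1 hd2 x ⟨hy.1, h1.le⟩).hasDerivAt (Icc_mem_nhds hy.1 h1)).deriv]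
  exact mul_neg_of_pos_of_neg (hpos y ⟨hy.1, h1.le⟩) (sub_neg.2 hy.2)

end Bregman

section Transfer

variable {k : ℕ} {F : Fin k → ℝ → ℝ} {q : Fin k → ℝ}

lemma probSimplex_pair_le_one (hq : q ∈ probSimplex k) {i j : Fin k} (hij : i ≠ j) :
    q i + q j ≤ 1 := by
  rw [← hq.2, ← Finset.sum_pair hij]
  exact Finset.sum_le_sum_of_subset_of_nonneg (Finset.subset_univ _) fun m _ _ => (hq.1 m).1

/-- Moving mass `ε` from coordinate `j` to coordinate `i` does not improve a minimizer of a
separable objective on the simplex. -/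
lemma transfer_le (hq : q ∈ probSimplex k)
    (hmin : ∀ r ∈ probSimplex k, (∑ i, F i (q i)) ≤ ∑ i, F i (r i))
    {i j : Fin k} (hij : i ≠ j) {ε : ℝ} (h0 : 0 ≤ ε) (h1 : ε ≤ q j) :
    F i (q i) + F j (q j) ≤ F i (q i + ε) + F j (q j - ε) := by
  set r : Fin k → ℝ := Function.update (Function.update q i (q i + ε)) j (q j - ε) with hr
  have ri : r i = q i + ε := by simp [hr, hij]
  have rj : r j = q j - ε := by simp [hr]
  have ro : ∀ m ∈ Finset.univ \ {i, j}, r m = q m := by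
    intro m hm
    simp only [Finset.mem_sdiff, Finset.mem_univ, true_and, Finset.mem_insert,
      Finset.mem_singleton, not_or] at hm
    simp [hr, hm.1, hm.2]
  have split : ∀ g : Fin k → ℝ, ∑ m, g m = ∑ m ∈ Finset.univ \ {i, j}, g m + (g i + g j) := by
    intro g
    rw [← Finset.sum_pair hij, Finset.sum_sdiff (Finset.subset_univ _)]
  have hpair := probSimplex_pair_le_one hq hij
  have hrs : r ∈ probSimplex k := by
    constructor
    · intro m
      by_cases hmj : m = j
      · subst hmj
        rw [rj]
        exact ⟨by linarith, by linarith [(hq.1 m).2]⟩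
      by_cases hmi : m = i
      · subst hmi
        rw [ri]
        exact ⟨by linarith [(hq.1 m).1], by linarith⟩
      rw [ro m (by simp [hmi, hmj])]
      exact hq.1 m
    · have := hq.2
      rw [split] at this ⊢
      rw [Finset.sum_congr rfl ro, ri, rj]
      linarith
  have h := hmin r hrs
  rw [split, split (fun m => F m (r m)), ri, rj,
    Finset.sum_congr rfl (fun m hm => by rw [ro m hm] : ∀ m ∈ Finset.univ \ {i, j},
      F m (r m) = F m (q m))] at h
  linarith

/-- First-order form of `transfer_le`. -/
lemma deriv_le_of_transfer (hq : q ∈ probSimplex k)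
    (hmin : ∀ r ∈ probSimplex k, (∑ i, F i (q i)) ≤ ∑ i, F i (r i))
    {i j : Fin k} (hij : i ≠ j) (hj : 0 < q j) {a b : ℝ}
    (ha : HasDerivWithinAt (F i) a (Set.Icc 0 1) (q i))
    (hb : HasDerivWithinAt (F j) b (Set.Icc 0 1) (q j)) : b ≤ a := by
  have hpair := probSimplex_pair_le_one hq hij
  have hi0 := (hq.1 i).1
  have hj1 := (hq.1 j).2
  have h1 : HasDerivWithinAt (fun ε => F i (q i + ε)) (a * 1) (Set.Icc 0 (q j)) 0 := by
    refine HasDerivWithinAt.comp (h₂ := F i) (h := fun ε => q i + ε) (s' := Set.Icc 0 1) 0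
      (by simpa using ha) ((hasDerivWithinAt_id _ _).const_add _) ?_
    intro e he
    exact ⟨by linarith [he.1], by linarith [he.2]⟩
  have h2 : HasDerivWithinAt (fun ε => F j (q j - ε)) (b * (-1)) (Set.Icc 0 (q j)) 0 := by
    refine HasDerivWithinAt.comp (h₂ := F j) (h := fun ε => q j - ε) (s' := Set.Icc 0 1) 0
      (by simpa using hb) ((hasDerivWithinAt_id _ _).const_sub _) ?_
    intro e he
    exact ⟨by linarith [he.2], by linarith [he.1]⟩
  have h3 := ((h1.add h2).mono (Set.Ioc_subset_Icc_self))
  rw [hasDerivWithinAt_iff_tendsto_slope' (by simp)] at h3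
  have : (nhdsWithin (0:ℝ) (Set.Ioc 0 (q j))).NeBot := by
    rw [nhdsWithin_Ioc_eq_nhdsGT hj]
    infer_instance
  have h4 := ge_of_tendsto (b := (0:ℝ)) h3 (by
    filter_upwards [self_mem_nhdsWithin] with ε hε
    have := transfer_le hq hmin hij hε.1.le hε.2
    rw [slope_def_field]
    refine div_nonneg ?_ (by linarith [hε.1])
    simp only [Pi.add_apply, add_zero, sub_zero]
    linarith)
  linarith

end Transfer

/-- Existence, uniqueness, and KKT characterization of the dual Bregman
projection. For a dual valid `φ` that is continuously differentiable on `[0,1]` and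
`x ∈ [0,1]^k` with `0 < Σ xᵢ < 1`, the problem `min_{q ∈ Δ_k} Σᵢ d_φ(xᵢ, qᵢ)` has a
unique minimizer `q*`, each coordinate satisfies `q*ᵢ ∈ (xᵢ, 1]`, and there is a single
Lagrange multiplier `ν* > 0` with `φ''(q*ᵢ)(q*ᵢ − xᵢ) = ν*` for all `i`. -/
theorem dual_bregman_projection_unique
    (k : ℕ) (hk : 1 ≤ k)
    (φ φ' φ'' φ''' : ℝ → ℝ)
    (hd1 : ∀ t ∈ Set.Ioc (0:ℝ) 1, HasDerivWithinAt φ (φ' t) (Set.Ioc 0 1) t)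
    (hd2 : ∀ t ∈ Set.Ioc (0:ℝ) 1, HasDerivWithinAt φ' (φ'' t) (Set.Ioc 0 1) t)
    (hd3 : ∀ t ∈ Set.Ioc (0:ℝ) 1, HasDerivWithinAt φ'' (φ''' t) (Set.Ioc 0 1) t)
    (hlim : Filter.Tendsto (fun t => t * φ'' t) (nhdsWithin 0 (Set.Ioi 0)) (nhds 0))
    (hsc1 : ∀ t ∈ Set.Ioc (0:ℝ) 1, StrictConvexOn ℝ (Set.Icc t 1) (fun y => breg φ φ' t y))
    (hsc2 : StrictConvexOn ℝ (Set.Ioc 0 1) (fun y => breg φ φ' 0 y))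
    (hC1 : ∀ t ∈ Set.Icc (0:ℝ) 1, HasDerivWithinAt φ (φ' t) (Set.Icc 0 1) t)
    (hC1cont : ContinuousOn φ' (Set.Icc 0 1))
    (x : Fin k → ℝ) (hx : ∀ i, x i ∈ Set.Icc (0:ℝ) 1)
    (hsum0 : 0 < ∑ i, x i) (hsum1 : (∑ i, x i) < 1) :
    ∃ q ∈ probSimplex k,
      (∀ r ∈ probSimplex k,
        (∑ i, breg φ φ' (x i) (q i)) ≤ ∑ i, breg φ φ' (x i) (r i)) ∧
      (∀ r ∈ probSimplex k,
        (∀ s ∈ probSimplex k,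
          (∑ i, breg φ φ' (x i) (r i)) ≤ ∑ i, breg φ φ' (x i) (s i)) → r = q) ∧
      (∀ i, q i ∈ Set.Ioc (x i) 1) ∧
      ∃ ν : ℝ, 0 < ν ∧ ∀ i, φ'' (q i) * (q i - x i) = ν := by
  have hpos : ∀ y ∈ Set.Ioc (0:ℝ) 1, 0 < φ'' y := fun y hy => snd_deriv_pos hd1 hd2 hsc1 hy
  have hcont := breg_continuousOn hC1 hC1cont
  have hder := @breg_hasDerivWithinAt φ φ' φ'' hd1 hd2
  have hgt : ∀ q ∈ probSimplex k,
      (∀ r ∈ probSimplex k,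
        (∑ i, breg φ φ' (x i) (q i)) ≤ ∑ i, breg φ φ' (x i) (r i)) → ∀ i, x i < q i := by
    intro q hq hmin i
    obtain ⟨j, -, hj⟩ : ∃ j ∈ Finset.univ, x j < q j :=
      Finset.exists_lt_of_sum_lt (by rw [hq.2]; exact hsum1)
    by_contra hcon
    have hle : q i ≤ x i := not_lt.1 hcon
    have hij : i ≠ j := by
      rintro rfl
      exact hcon hj
    have hj0 : 0 < q j := (hx j).1.trans_lt hj
    rcases hle.lt_or_eq with hlt | heq
    · set ε := min (x i - q i) (q j - x j) with hε
      have e0 : 0 < ε := lt_min (by linarith) (by linarith)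
      have e1 : ε ≤ x i - q i := min_le_left _ _
      have e2 : ε ≤ q j - x j := min_le_right _ _
      have h := transfer_le (F := fun i => breg φ φ' (x i)) hq hmin hij e0.le
        (by linarith [(hx j).1])
      have hi' : breg φ φ' (x i) (q i + ε) < breg φ φ' (x i) (q i) :=
        breg_strictAntiOn hd1 hd2 hpos hcont (hx i).2 ⟨(hq.1 i).1, hle⟩
          ⟨by linarith [(hq.1 i).1], by linarith⟩ (by linarith)
      have hj' : breg φ φ' (x j) (q j - ε) < breg φ φ' (x j) (q j) :=
        breg_strictMonoOn hd1 hd2 hpos hcont (hx j).1 ⟨by linarith, by linarith [(hq.1 j).2]⟩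
          ⟨hj.le, (hq.1 j).2⟩ (by linarith)
      linarith
    · have hdi : HasDerivWithinAt (breg φ φ' (x i)) 0 (Set.Icc 0 1) (q i) := by
        rcases (hx i).1.eq_or_lt with h0 | h0
        · rw [heq, ← h0]
          exact breg_zero_hasDerivWithinAt hd1 hd2 hlim hC1 hC1cont
        · have := hder (x i) (y := q i) ⟨by rw [heq]; exact h0, (hq.1 i).2⟩
          simpa [heq] using this
      have h := deriv_le_of_transfer (F := fun i => breg φ φ' (x i)) hq hmin hij hj0 hdi
        (hder (x j) ⟨hj0, (hq.1 j).2⟩)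
      have := mul_pos (hpos (q j) ⟨hj0, (hq.1 j).2⟩) (sub_pos.2 hj)
      linarith
  have hsc : ∀ i, StrictConvexOn ℝ (Set.Ioc (x i) 1) (breg φ φ' (x i)) := by
    intro i
    rcases (hx i).1.eq_or_lt with h0 | h0
    · rw [← h0]
      exact hsc2
    · exact (hsc1 (x i) ⟨h0, (hx i).2⟩).subset Set.Ioc_subset_Icc_self (convex_Ioc _ _)
  have hcompact : IsCompact (probSimplex k) := by
    have : probSimplex k = (Set.univ.pi fun _ => Set.Icc (0:ℝ) 1) ∩ {q | ∑ i, q i = 1} := by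
      ext q
      simp only [probSimplex, Set.mem_ofPred_eq, Set.mem_inter_iff, Set.mem_univ_pi]
    rw [this]
    exact (isCompact_univ_pi fun _ => isCompact_Icc).inter_right
      (isClosed_eq (by fun_prop) continuous_const)
  have hne : (probSimplex k).Nonempty := by
    refine ⟨Pi.single ⟨0, hk⟩ 1, fun i => ?_, by simp⟩
    by_cases h : i = ⟨0, hk⟩
    · subst h
      simp
    · simp [Pi.single_eq_of_ne h]
  obtain ⟨q, hq, hmin⟩ := hcompact.exists_isMinOn hne
    (f := fun q => ∑ i, breg φ φ' (x i) (q i)) (continuousOn_finsetSum _ fun i _ =>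
      (hcont (x i)).comp (continuous_apply i).continuousOn fun q hq => hq.1 i)
  have hmin' : ∀ r ∈ probSimplex k,
      (∑ i, breg φ φ' (x i) (q i)) ≤ ∑ i, breg φ φ' (x i) (r i) := fun r hr => hmin hr
  have hqx := hgt q hq hmin'
  have hq0 : ∀ i, q i ∈ Set.Ioc (0:ℝ) 1 := fun i => ⟨(hx i).1.trans_lt (hqx i), (hq.1 i).2⟩
  refine ⟨q, hq, hmin', ?_, fun i => ⟨hqx i, (hq.1 i).2⟩, φ'' (q ⟨0, hk⟩) * (q ⟨0, hk⟩ - x ⟨0, hk⟩),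
    mul_pos (hpos _ (hq0 _)) (sub_pos.2 (hqx _)), fun i => ?_⟩
  · intro r hr hrmin
    have hrx := hgt r hr hrmin
    by_contra hne
    obtain ⟨j, hj⟩ := Function.ne_iff.1 hne
    set m : Fin k → ℝ := fun i => (1 / 2 : ℝ) • r i + (1 / 2 : ℝ) • q i with hm
    have hms : m ∈ probSimplex k := by
      constructor
      · intro i
        exact convex_Icc (0:ℝ) 1 (hr.1 i) (hq.1 i) (by norm_num) (by norm_num) (by norm_num)
      · simp only [hm, smul_eq_mul, Finset.sum_add_distrib, ← Finset.mul_sum, hr.2, hq.2]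
        norm_num
    have hlt : ∑ i, breg φ φ' (x i) (m i) <
        ∑ i, ((1 / 2 : ℝ) • breg φ φ' (x i) (r i) + (1 / 2 : ℝ) • breg φ φ' (x i) (q i)) := by
      refine Finset.sum_lt_sum (fun i _ => ?_) ⟨j, Finset.mem_univ j, ?_⟩
      · exact (hsc i).convexOn.2 ⟨hrx i, (hr.1 i).2⟩ ⟨hqx i, (hq.1 i).2⟩ (by norm_num)
          (by norm_num) (by norm_num)
      · exact (hsc j).2 ⟨hrx j, (hr.1 j).2⟩ ⟨hqx j, (hq.1 j).2⟩ hj (by norm_num)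
          (by norm_num) (by norm_num)
    simp only [smul_eq_mul, Finset.sum_add_distrib, ← Finset.mul_sum] at hlt
    linarith [hrmin m hms, hmin' m hms]
  · by_cases hi : i = ⟨0, hk⟩
    · rw [hi]
    · have hd := fun i => hder (x i) (hq0 i)
      exact le_antisymm
        (deriv_le_of_transfer (F := fun i => breg φ φ' (x i)) hq hmin' (Ne.symm hi) (hq0 i).1
          (hd _) (hd i))
        (deriv_le_of_transfer (F := fun i => breg φ φ' (x i)) hq hmin' hi (hq0 _).1 (hd i) (hd _))
end

section
/- Let k ≥ 1 and let x ∈ [0,1]^k satisfy s := Σ_{j=1}^k x_j ≤ 1. Set r := Σ_{j=1}^k √(x_j) and ν := (√(r² + k·(1 − s)) − r)/k ≥ 0, and define q ∈ ℝ^k by qᵢ = (√(xᵢ) + ν)². Then q ∈ Δ_k (in particular Σᵢ qᵢ = 1), and q minimizes over Δ_k the separable Bregman divergence D_{φ_{3/2}}(q, x) = Σᵢ d_{φ_{3/2}}(qᵢ, xᵢ) generated by φ_{3/2}(t) = t^{3/2}/((3/2)(1/2)); that is, the primal Bregman 1.5-renormalization map is given in closed form by [T_{1.5}(x)]ᵢ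 = (√(xᵢ) + [√(r² + k(1 − s)) − r]/k)². -/
/-!
The constant `ν` is the nonnegative root of `k ν² + 2 r ν = 1 - s`, which is exactly the condition
`∑ (√xᵢ + ν)² = 1`. Optimality is the Lagrange/KKT argument for a convex objective: at
`qᵢ = (√xᵢ + ν)²` the derivative `2√qᵢ - 2√xᵢ = 2ν` of the objective is the same in every
coordinate, so the tangent-line inequality `breg_tangent` sums to the claim, its linear term
vanishing because both points have total mass one. In terms of `b = √q` and `c = √w`, the
tangent-line inequality is `(2/3) (c - b)² (2c + b) ≥ 0`.
-/

open Finset Set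

/-- The `α = 3/2` entropy generator `φ_{3/2}(t) = t^{3/2}/((3/2)(1/2))`. -/
noncomputable def phi32 (t : ℝ) : ℝ := t ^ ((3:ℝ)/2) / ((3/2) * (1/2))

/-- Its derivative `φ_{3/2}'(t) = t^{1/2}/(1/2) = 2√t`. -/
noncomputable def phi32' (t : ℝ) : ℝ := 2 * Real.sqrt t

lemma phi32_sq {t : ℝ} (ht : 0 ≤ t) : phi32 (t ^ 2) = 4 / 3 * t ^ 3 := by
  have h : (t ^ 2) ^ ((3 : ℝ) / 2) = t ^ 3 := by
    rw [← Real.rpow_natCast t 2, ← Real.rpow_mul ht, ← Real.rpow_natCast t 3]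
    norm_num
  rw [phi32, h]
  ring

/-- Tangent-line inequality for `w ↦ d(w, x)` at `q = (√x + ν)²`, where its slope is `2ν`. -/
lemma breg_tangent {x w ν : ℝ} (hw : 0 ≤ w) (hν : 0 ≤ ν) :
    breg phi32 phi32' ((Real.sqrt x + ν) ^ 2) x + 2 * ν * (w - (Real.sqrt x + ν) ^ 2) ≤
      breg phi32 phi32' w x := by
  have ha := Real.sqrt_nonneg x
  have hc := Real.sqrt_nonneg w
  have hφw : phi32 w = 4 / 3 * Real.sqrt w ^ 3 := by
    rw [← phi32_sq hc, Real.sq_sqrt hw]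
  have hwc : w = Real.sqrt w ^ 2 := (Real.sq_sqrt hw).symm
  unfold breg phi32'
  rw [hφw, phi32_sq (add_nonneg ha hν)]
  generalize Real.sqrt w = c at *
  subst hwc
  have key : 0 ≤ (c - (Real.sqrt x + ν)) ^ 2 * (2 * c + (Real.sqrt x + ν)) := by positivity
  linear_combination (2 / 3) * key

/-- Closed form for primal Bregman 1.5-renormalization. For `x ∈ [0,1]^k`
with `s = Σ xⱼ ≤ 1`, setting `r = Σⱼ √(xⱼ)` and `ν = (√(r² + k(1−s)) − r)/k`, one has
`ν ≥ 0`, and the vector `qᵢ = (√(xᵢ) + ν)²` lies in `Δ_k` and minimizes over `Δ_k` the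
separable Bregman divergence generated by `φ_{3/2}`. -/
theorem primal_three_halves_renormalization_closed_form
    (k : ℕ) (hk : 1 ≤ k) (x : Fin k → ℝ)
    (hx : ∀ i, x i ∈ Set.Icc (0:ℝ) 1) (hs : (∑ j, x j) ≤ 1)
    (s r ν : ℝ)
    (hsdef : s = ∑ j, x j)
    (hrdef : r = ∑ j, Real.sqrt (x j))
    (hνdef : ν = (Real.sqrt (r ^ 2 + (k : ℝ) * (1 - s)) - r) / (k : ℝ)) :
    0 ≤ ν ∧
    (fun i => (Real.sqrt (x i) + ν) ^ 2) ∈ probSimplex k ∧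
    ∀ w ∈ probSimplex k,
      (∑ i, breg phi32 phi32' ((Real.sqrt (x i) + ν) ^ 2) (x i)) ≤
        ∑ i, breg phi32 phi32' (w i) (x i) := by
  have hk0 : (0 : ℝ) < k := by exact_mod_cast hk
  have hr : 0 ≤ r := hrdef ▸ Finset.sum_nonneg fun i _ => Real.sqrt_nonneg _
  have hs1 : 0 ≤ (k : ℝ) * (1 - s) := mul_nonneg hk0.le (by linarith)
  have hν : 0 ≤ ν := by
    rw [hνdef]
    exact div_nonneg (sub_nonneg.2 (Real.le_sqrt_of_sq_le (by linarith))) hk0.le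
  have hquad : k * ν ^ 2 + 2 * r * ν = 1 - s := by
    have h1 : k * ν + r = Real.sqrt (r ^ 2 + (k : ℝ) * (1 - s)) := by
      rw [hνdef]
      field_simp
      ring
    have h2 : (k * ν + r) ^ 2 = r ^ 2 + (k : ℝ) * (1 - s) := by
      rw [h1, Real.sq_sqrt (by positivity)]
    apply mul_left_cancel₀ hk0.ne'
    linear_combination h2
  have hsum : ∑ i, (Real.sqrt (x i) + ν) ^ 2 = 1 := by
    have h : ∀ i, (Real.sqrt (x i) + ν) ^ 2 = x i + 2 * ν * Real.sqrt (x i) + ν ^ 2 := by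
      intro i
      linear_combination Real.sq_sqrt (hx i).1
    simp only [h, Finset.sum_add_distrib, ← Finset.mul_sum, ← hsdef, ← hrdef]
    simp only [Finset.sum_const, Finset.card_univ, Fintype.card_fin, nsmul_eq_mul]
    linear_combination hquad
  refine ⟨hν, ⟨fun i => ⟨sq_nonneg _, ?_⟩, hsum⟩, fun w hw => ?_⟩
  · rw [← hsum]
    exact Finset.single_le_sum (f := fun i => (Real.sqrt (x i) + ν) ^ 2)
      (fun j _ => sq_nonneg _) (Finset.mem_univ i)
  · have h := Finset.sum_le_sum fun i (_ : i ∈ Finset.univ) =>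
      breg_tangent (x := x i) (hw.1 i).1 hν
    rw [Finset.sum_add_distrib, ← Finset.mul_sum, Finset.sum_sub_distrib, hsum, hw.2] at h
    linarith
end

section
/- Let k ≥ 1 and let p ∈ [0,1]^k with Σᵢ pᵢ < 1. For each β > 0, the map ν ↦ Σᵢ (pᵢ^β + ν)^{1/β} is continuous and strictly increasing on [0,∞), so there is a unique ν_β > 0 with Σᵢ (pᵢ^β + ν_β)^{1/β} = 1; also there is a unique water level c ∈ (0,1] with Σᵢ max{pᵢ, c} = 1. Then for every index i, lim_{β→∞} (pᵢ^β + ν_β)^{1/β} = max{pᵢ, c}. That is, the primal Bregman α-renormalization maps converge pointwise, as α = β + 1 → ∞, to the water-filling renormalization [T_∞(p)]ᵢ = max{pᵢ, c}. -/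
/-!
Write `m = ν_β^{1/β}` and `F(c) = Σᵢ max{pᵢ, c}`. The proof compares the `ℓ^β` norm of the pair
`(pᵢ, m)` with its sup norm:
`max{pᵢ, m} ≤ (pᵢ^β + ν_β)^{1/β} ≤ 2^{1/β} max{pᵢ, m}` (`max_le_renorm`, `renorm_le`).
Summing over `i` gives `2^{-1/β} ≤ F(m) ≤ 1 = F(c)`. Since `F` is strictly increasing beyond `c`
(`level_lt`), the right inequality forces `m ≤ c`. Every term of `F(c) - F(m)` is then nonnegative,
so each one is at most `1 - 2^{-1/β}`, whence
`max{pᵢ, c} - (1 - 2^{-1/β}) ≤ (pᵢ^β + ν_β)^{1/β} ≤ 2^{1/β} max{pᵢ, c}`,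
and both bounds tend to `max{pᵢ, c}`. The two existence claims are the intermediate value theorem
on `[0,1]`.
-/

open Finset Set Filter

lemma rpow_rpow_one_div {x β : ℝ} (hx : 0 ≤ x) (hβ : 0 < β) : (x ^ β) ^ (1/β) = x := by
  rw [← Real.rpow_mul hx, mul_one_div_cancel hβ.ne', Real.rpow_one]

lemma max_le_renorm {x m β : ℝ} (hx : 0 ≤ x) (hm : 0 ≤ m) (hβ : 0 < β) :
    max x m ≤ (x ^ β + m ^ β) ^ (1/β) := by
  have h1 := Real.rpow_nonneg hx β
  have h2 := Real.rpow_nonneg hm β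
  have hb : 0 ≤ 1/β := by positivity
  apply max_le
  · calc x = (x ^ β) ^ (1/β) := (rpow_rpow_one_div hx hβ).symm
      _ ≤ _ := Real.rpow_le_rpow h1 (by linarith) hb
  · calc m = (m ^ β) ^ (1/β) := (rpow_rpow_one_div hm hβ).symm
      _ ≤ _ := Real.rpow_le_rpow h2 (by linarith) hb

lemma renorm_le {x m β : ℝ} (hx : 0 ≤ x) (hm : 0 ≤ m) (hβ : 0 < β) :
    (x ^ β + m ^ β) ^ (1/β) ≤ 2 ^ (1/β) * max x m := by
  have hM : 0 ≤ max x m := le_max_of_le_left hx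
  have h1 : x ^ β ≤ max x m ^ β := Real.rpow_le_rpow hx (le_max_left _ _) hβ.le
  have h2 : m ^ β ≤ max x m ^ β := Real.rpow_le_rpow hm (le_max_right _ _) hβ.le
  have h3 := Real.rpow_nonneg hx β
  have h4 := Real.rpow_nonneg hm β
  calc (x ^ β + m ^ β) ^ (1/β) ≤ (2 * max x m ^ β) ^ (1/β) :=
        Real.rpow_le_rpow (by linarith) (by linarith) (by positivity)
    _ = 2 ^ (1/β) * max x m := by
        rw [Real.mul_rpow (by norm_num) (Real.rpow_nonneg hM β), rpow_rpow_one_div hM hβ]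

/-- The water-filling sum is strictly increasing beyond any level at which it equals `1`: since
`Σ pᵢ < 1`, some coordinate lies strictly below that level. -/
lemma level_lt {k : ℕ} {p : Fin k → ℝ} (hsum : (∑ i, p i) < 1) {c m : ℝ}
    (hc : (∑ i, max (p i) c) = 1) (hcm : c < m) : 1 < ∑ i, max (p i) m := by
  obtain ⟨j, hj⟩ : ∃ j, p j < c := by
    by_contra! h
    have : (∑ i, max (p i) c) = ∑ i, p i := Finset.sum_congr rfl fun i _ => max_eq_left (h i)
    linarith
  rw [← hc]
  refine Finset.sum_lt_sum (fun i _ => max_le_max le_rfl hcm.le) ⟨j, Finset.mem_univ j, ?_⟩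
  rw [max_eq_right hj.le]
  exact lt_max_of_lt_right hcm

/-- Water-filling limit of primal Bregman α-renormalization. Let
`p ∈ [0,1]^k` with `Σ pᵢ < 1`. For each `β > 0` the map
`ν ↦ Σᵢ (pᵢ^β + ν)^{1/β}` is continuous and strictly increasing on `[0,∞)` and there
is a unique `ν_β > 0` making the sum equal to `1`; there is a unique water level
`c ∈ (0,1]` with `Σᵢ max{pᵢ, c} = 1`; and for every `i`,
`(pᵢ^β + ν_β)^{1/β} → max{pᵢ, c}` as `β → ∞`. -/
theorem waterfilling_limit
    (k : ℕ) (hk : 1 ≤ k) (p : Fin k → ℝ)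
    (hp : ∀ i, p i ∈ Set.Icc (0:ℝ) 1) (hsum : (∑ i, p i) < 1) :
    (∀ β : ℝ, 0 < β →
      ContinuousOn (fun ν : ℝ => ∑ i, (p i ^ β + ν) ^ (1/β)) (Set.Ici 0) ∧
      StrictMonoOn (fun ν : ℝ => ∑ i, (p i ^ β + ν) ^ (1/β)) (Set.Ici 0) ∧
      ∃! ν : ℝ, 0 < ν ∧ (∑ i, (p i ^ β + ν) ^ (1/β)) = 1) ∧
    (∃! c : ℝ, c ∈ Set.Ioc (0:ℝ) 1 ∧ (∑ i, max (p i) c) = 1) ∧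
    ∀ (ν : ℝ → ℝ) (c : ℝ),
      (∀ β : ℝ, 0 < β → 0 < ν β ∧ (∑ i, (p i ^ β + ν β) ^ (1/β)) = 1) →
      c ∈ Set.Ioc (0:ℝ) 1 → (∑ i, max (p i) c) = 1 →
      ∀ i, Filter.Tendsto (fun β : ℝ => (p i ^ β + ν β) ^ (1/β))
        Filter.atTop (nhds (max (p i) c)) := by
  refine ⟨fun β hβ => ?_, ?_, ?_⟩
  · have hb : 0 < 1/β := by positivity
    have hcont : ContinuousOn (fun ν : ℝ => ∑ i, (p i ^ β + ν) ^ (1/β)) (Set.Ici 0) :=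
      (continuous_finsetSum _ fun i _ =>
        (continuous_const.add continuous_id).rpow_const fun _ => Or.inr hb.le).continuousOn
    have hmono : StrictMonoOn (fun ν : ℝ => ∑ i, (p i ^ β + ν) ^ (1/β)) (Set.Ici 0) := by
      intro a ha b _ hab
      have ha : 0 ≤ a := ha
      refine Finset.sum_lt_sum_of_nonempty ⟨⟨0, hk⟩, Finset.mem_univ _⟩ fun i _ => ?_
      have := Real.rpow_nonneg (hp i).1 β
      exact Real.rpow_lt_rpow (by linarith) (by linarith) hb
    refine ⟨hcont, hmono, ?_⟩
    have h0 : (∑ i, (p i ^ β + 0) ^ (1/β)) = ∑ i, p i :=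
      Finset.sum_congr rfl fun i _ => by rw [add_zero, rpow_rpow_one_div (hp i).1 hβ]
    have h1 : 1 ≤ ∑ i, (p i ^ β + 1) ^ (1/β) := by
      calc (1:ℝ) ≤ k := by exact_mod_cast hk
        _ = ∑ i : Fin k, (1:ℝ) := by simp
        _ ≤ _ := Finset.sum_le_sum fun i _ => by
          have := Real.rpow_nonneg (hp i).1 β
          exact Real.one_le_rpow (by linarith) hb.le
    obtain ⟨ν, hν, hν1⟩ := intermediate_value_Icc (zero_le_one' ℝ)
      (hcont.mono Set.Icc_subset_Ici_self)
      (show (1:ℝ) ∈ Set.Icc _ _ from ⟨by simp only [h0]; exact hsum.le, h1⟩)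
    have hν0 : ν ≠ 0 := by
      rintro rfl
      simp only [h0] at hν1
      linarith
    refine ⟨ν, ⟨lt_of_le_of_ne hν.1 hν0.symm, hν1⟩, ?_⟩
    rintro μ ⟨hμ, hμ1⟩
    exact hmono.injOn hμ.le hν.1 (hμ1.trans hν1.symm)
  · have hcont : Continuous (fun c : ℝ => ∑ i, max (p i) c) := by fun_prop
    have h0 : (∑ i, max (p i) 0) = ∑ i, p i :=
      Finset.sum_congr rfl fun i _ => max_eq_left (hp i).1
    have h1 : 1 ≤ ∑ i, max (p i) 1 := by
      calc (1:ℝ) ≤ k := by exact_mod_cast hk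
        _ = ∑ i : Fin k, (1:ℝ) := by simp
        _ ≤ _ := Finset.sum_le_sum fun i _ => le_max_right _ _
    obtain ⟨c, hc, hc1⟩ := intermediate_value_Icc (zero_le_one' ℝ) hcont.continuousOn
      (show (1:ℝ) ∈ Set.Icc _ _ from ⟨by simp only [h0]; exact hsum.le, h1⟩)
    have hc0 : c ≠ 0 := by
      rintro rfl
      simp only [h0] at hc1
      linarith
    refine ⟨c, ⟨⟨lt_of_le_of_ne hc.1 hc0.symm, hc.2⟩, hc1⟩, ?_⟩
    rintro d ⟨-, hd⟩
    rcases lt_trichotomy d c with h | h | h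
    · exact absurd hc1 (level_lt hsum hd h).ne'
    · exact h
    · exact absurd hd (level_lt hsum hc1 h).ne'
  · intro ν c hν _ hc1 i
    have hexp : Tendsto (fun β : ℝ => (2:ℝ) ^ (1/β)) atTop (nhds 1) := by
      have h : Tendsto (fun β : ℝ => 1/β) atTop (nhds 0) := by
        simpa only [one_div] using tendsto_inv_atTop_zero (𝕜 := ℝ)
      simpa using tendsto_const_nhds (x := (2:ℝ)).rpow h (Or.inl two_ne_zero)
    have hlow : Tendsto (fun β : ℝ => max (p i) c - (1 - ((2:ℝ) ^ (1/β))⁻¹)) atTop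
        (nhds (max (p i) c)) := by
      simpa using ((hexp.inv₀ one_ne_zero).const_sub 1).const_sub (max (p i) c)
    have hup : Tendsto (fun β : ℝ => (2:ℝ) ^ (1/β) * max (p i) c) atTop
        (nhds (max (p i) c)) := by
      simpa using hexp.mul_const (max (p i) c)
    have key : ∀ β : ℝ, 0 < β →
        max (p i) c - (1 - ((2:ℝ) ^ (1/β))⁻¹) ≤ (p i ^ β + ν β) ^ (1/β) ∧
        (p i ^ β + ν β) ^ (1/β) ≤ (2:ℝ) ^ (1/β) * max (p i) c := by
      intro β hβ
      obtain ⟨hν0, hν1⟩ := hν β hβ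
      obtain ⟨m, hm, hmν⟩ : ∃ m : ℝ, 0 ≤ m ∧ ν β = m ^ β :=
        ⟨ν β ^ (1/β), Real.rpow_nonneg hν0.le _, by
          rw [← Real.rpow_mul hν0.le, one_div_mul_cancel hβ.ne', Real.rpow_one]⟩
      rw [hmν] at hν1 ⊢
      have h2 : 0 < (2:ℝ) ^ (1/β) := by positivity
      have hF1 : (∑ j, max (p j) m) ≤ 1 :=
        hν1 ▸ Finset.sum_le_sum fun j _ => max_le_renorm (hp j).1 hm hβ
      have hF2 : ((2:ℝ) ^ (1/β))⁻¹ ≤ ∑ j, max (p j) m := by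
        rw [inv_le_iff_one_le_mul₀' h2, Finset.mul_sum]
        exact hν1.ge.trans (Finset.sum_le_sum fun j _ => renorm_le (hp j).1 hm hβ)
      have hmc : m ≤ c := by
        by_contra! h
        exact absurd (level_lt hsum hc1 h) (not_lt.mpr hF1)
      have hmax : ∀ j, max (p j) m ≤ max (p j) c := fun j => max_le_max le_rfl hmc
      have hterm : max (p i) c - max (p i) m ≤ ∑ j, (max (p j) c - max (p j) m) :=
        Finset.single_le_sum (f := fun j => max (p j) c - max (p j) m)
          (fun j _ => sub_nonneg.mpr (hmax j)) (Finset.mem_univ i)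
      rw [Finset.sum_sub_distrib, hc1] at hterm
      constructor
      · linarith [max_le_renorm (hp i).1 hm hβ]
      · exact (renorm_le (hp i).1 hm hβ).trans (mul_le_mul_of_nonneg_left (hmax i) h2.le)
    refine tendsto_of_tendsto_of_tendsto_of_le_of_le' hlow hup ?_ ?_
    · filter_upwards [eventually_gt_atTop 0] with β hβ using (key β hβ).1
    · filter_upwards [eventually_gt_atTop 0] with β hβ using (key β hβ).2
end

section
/- Let φ : [0,1] → ℝ be three times differentiable on (0,1], define v(x,y) = φ''(y) + φ'''(y)·(y − x), and define ψ(x,y) = φ(y) − φ'(y)·(y − x). Fix x ∈ [0,1] and ν₀ > 0, and suppose ξ : U → (0,1] is differentiable on an open neighborhood U of ν₀ with ξ(ν) ≥ x, φ''(ξ(ν))·(ξ(ν) − x) = ν for all ν ∈ U, and v(x, ξ(ν₀)) > 0. Then the map ν ↦ ψ(x, ξ(ν)) is differentiable at ν₀ with derivative −ν₀ / v(x, ξ(ν₀)), which is ≤ 0; in particular the per-coordinate dual loss contribution h(x,ν) = ψ(x, ξ(x,ν)) is nonincreasing in the Lagrange multiplier ν. -/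
open Set Filter

/-! Implicit differentiation of `φ''(ξ(ν)) (ξ(ν) - x) = ν` gives `v(x, ξ(ν₀)) ξ'(ν₀) = 1`, while
`∂ψ/∂y = -φ''(y) (y - x)`, which equals `-ν₀` at `y = ξ(ν₀)`. By the chain rule the derivative of
`ψ(x, ξ(ν))` at `ν₀` is `-ν₀ ξ'(ν₀) = -ν₀ / v(x, ξ(ν₀))`. -/

/-- The per-coordinate dual loss contribution is nonincreasing in the
Lagrange multiplier. Let `φ` be three times differentiable on `(0,1]`, set
`v(x,y) = φ''(y) + φ'''(y)(y − x)` and `ψ(x,y) = φ(y) − φ'(y)(y − x)`. If `ξ` is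
differentiable on an open neighborhood `U` of `ν₀ > 0` with `ξ(ν) ∈ (0,1]`,
`ξ(ν) ≥ x`, `φ''(ξ(ν))(ξ(ν) − x) = ν` on `U`, and `v(x, ξ(ν₀)) > 0`, then
`ν ↦ ψ(x, ξ(ν))` has derivative `−ν₀/v(x, ξ(ν₀)) ≤ 0` at `ν₀`. -/
theorem dual_loss_decreasing_in_multiplier
    (φ φ' φ'' φ''' : ℝ → ℝ)
    (hd1 : ∀ t ∈ Set.Ioc (0:ℝ) 1, HasDerivWithinAt φ (φ' t) (Set.Ioc 0 1) t)
    (hd2 : ∀ t ∈ Set.Ioc (0:ℝ) 1, HasDerivWithinAt φ' (φ'' t) (Set.Ioc 0 1) t)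
    (hd3 : ∀ t ∈ Set.Ioc (0:ℝ) 1, HasDerivWithinAt φ'' (φ''' t) (Set.Ioc 0 1) t)
    (x : ℝ) (hx : x ∈ Set.Icc (0:ℝ) 1)
    (ν₀ : ℝ) (hν₀ : 0 < ν₀)
    (U : Set ℝ) (hU : IsOpen U) (hν₀U : ν₀ ∈ U)
    (ξ : ℝ → ℝ)
    (hξdiff : ∀ ν ∈ U, DifferentiableAt ℝ ξ ν)
    (hξ : ∀ ν ∈ U, ξ ν ∈ Set.Ioc (0:ℝ) 1 ∧ x ≤ ξ ν ∧ φ'' (ξ ν) * (ξ ν - x) = ν)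
    (hv : 0 < φ'' (ξ ν₀) + φ''' (ξ ν₀) * (ξ ν₀ - x)) :
    HasDerivAt (fun ν => φ (ξ ν) - φ' (ξ ν) * (ξ ν - x))
      (-ν₀ / (φ'' (ξ ν₀) + φ''' (ξ ν₀) * (ξ ν₀ - x))) ν₀ ∧
    -ν₀ / (φ'' (ξ ν₀) + φ''' (ξ ν₀) * (ξ ν₀ - x)) ≤ 0 := by
  -- The generator is only differentiable within `(0,1]`, and `ξ ν₀` may be the endpoint `1`;
  -- since `ξ` maps `U` into `(0,1]`, composing with `ξ` still gives two-sided derivatives.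
  have hmaps : MapsTo ξ U (Ioc 0 1) := fun ν hν => (hξ ν hν).1
  have hUn : U ∈ nhds ν₀ := hU.mem_nhds hν₀U
  have hD : HasDerivAt ξ (deriv ξ ν₀) ν₀ := (hξdiff ν₀ hν₀U).hasDerivAt
  have chain : ∀ f f' : ℝ → ℝ,
      (∀ t ∈ Ioc (0:ℝ) 1, HasDerivWithinAt f (f' t) (Ioc 0 1) t) →
      HasDerivAt (fun ν => f (ξ ν)) (f' (ξ ν₀) * deriv ξ ν₀) ν₀ := fun f f' hf =>
    ((hf _ (hmaps hν₀U)).comp ν₀ hD.hasDerivWithinAt hmaps).hasDerivAt hUn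
  have hDx : HasDerivAt (fun ν => ξ ν - x) (deriv ξ ν₀) ν₀ := hD.sub_const x
  -- Differentiating the stationarity equation gives `v(x, ξ ν₀) * ξ'(ν₀) = 1`.
  have hstat : HasDerivAt (fun ν => φ'' (ξ ν) * (ξ ν - x)) 1 ν₀ :=
    (hasDerivAt_id ν₀).congr_of_eventuallyEq
      (eventually_of_mem hUn fun ν hν => (hξ ν hν).2.2)
  have hone := ((chain φ'' φ''' hd3).mul hDx).unique hstat
  refine ⟨?_, div_nonpos_of_nonpos_of_nonneg (by linarith) hv.le⟩
  refine ((chain φ φ' hd1).sub ((chain φ' φ'' hd2).mul hDx)).congr_deriv ?_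
  rw [eq_div_iff (ne_of_gt hv)]
  -- The `φ'` terms cancel, leaving `-(φ''(ξ ν₀) * (ξ ν₀ - x)) * ξ'(ν₀) = -ν₀ * ξ'(ν₀)`.
  have hν := (hξ ν₀ hν₀U).2.2
  linear_combination (-(φ'' (ξ ν₀) * (ξ ν₀ - x))) * hone - hν
end

section
/- Let φ : [0,1] → ℝ be three times differentiable on (0,1] with φ' ≥ 0 on (0,1], suppose the elasticity u(t) = t·φ''(t)/φ'(t) is nondecreasing on (0,1], and define v(x,y) = φ''(y) + φ'''(y)·(y − x) and ψ(x,y) = φ(y) − φ'(y)·(y − x). Fix ν > 0 and x₀ ∈ [0,1), and suppose η is a differentiable function on an open neighborhood of x₀ with η(x) ∈ (0,1], η(x) ≥ x, φ''(η(x))·(η(x) − x) = ν, and v(x, η(x)) > 0. Then the map x ↦ ψ(x, η(x)) is differentiable at x₀ with derivative φ'(η(x₀)) − ν·φ''(η(x₀))/v(x₀, η(x₀)), and this derivative is ≥ 0; in particular the per-coordinate dual loss contribution h(x,ν) = ψ(x, ξ(x,ν)) is nondecreasing in x. -/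
/-!
Write `y = η x₀`. Differentiating the constraint `φ''(η x)(η x - x) = ν` gives `η' · v = φ''(y)`,
and then the derivative of `ψ(x, η x)` collapses to `φ'(y) - ν η'`, which is the stated value.

For the sign, `ν > 0` forces `φ''(y) > 0` and `x₀ < y`. Since `φ' ≥ 0` on the left of `y`, also
`φ'(y) > 0` (`pos_of_deriv_pos_of_nonneg`), so the elasticity is differentiable at `y`; its
monotonicity gives `y φ''² ≤ φ' (φ'' + y φ''')` (`elasticity_deriv_ineq`). Scaling by
`(y - x₀) / y ∈ (0, 1]` yields `(y - x₀) φ''² ≤ φ' v`, that is `ν φ'' / v ≤ φ'`.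
-/

open Set Filter

/-- If `f` vanished at `y`, a positive derivative would make `f` negative just to the left of `y`. -/
lemma pos_of_deriv_pos_of_nonneg {f : ℝ → ℝ} {d y : ℝ} (hy : y ∈ Ioc (0:ℝ) 1)
    (hf : HasDerivWithinAt f d (Ioc 0 1) y) (hnn : ∀ t ∈ Ioc (0:ℝ) 1, 0 ≤ f t)
    (hd : 0 < d) : 0 < f y := by
  refine lt_of_le_of_ne (hnn y hy) fun h0 => ?_
  have hsub : Ioo (0:ℝ) y ⊆ Ioc 0 1 := fun t ht => ⟨ht.1, ht.2.le.trans hy.2⟩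
  have ht := (hasDerivWithinAt_iff_tendsto_slope' (by simp)).1 (hf.mono hsub)
  have : (nhdsWithin y (Ioo 0 y)).NeBot := right_nhdsWithin_Ioo_neBot hy.1
  have : d ≤ 0 := by
    refine le_of_tendsto ht ?_
    filter_upwards [self_mem_nhdsWithin] with t ht
    rw [slope_def_field, ← h0, sub_zero]
    exact div_nonpos_of_nonneg_of_nonpos (hnn t (hsub ht)) (by linarith [ht.2])
  linarith

/-- Nonnegativity of the derivative of the elasticity `t f'(t) / f(t)`, cleared of denominators. -/
lemma elasticity_deriv_ineq {f f' : ℝ → ℝ} {f'' y : ℝ} (hy : y ∈ Ioc (0:ℝ) 1)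
    (hf : HasDerivWithinAt f (f' y) (Ioc 0 1) y)
    (hf' : HasDerivWithinAt f' f'' (Ioc 0 1) y) (hpos : 0 < f y)
    (hmono : MonotoneOn (fun t => t * f' t / f t) (Ioc 0 1)) :
    y * f' y ^ 2 ≤ f y * (f' y + y * f'') := by
  have h := ((hasDerivWithinAt_id y (Ioc (0:ℝ) 1)).mul hf').div hf hpos.ne'
  have hnn := hmono.derivWithin_nonneg (x := y)
  have heq := h.derivWithin (uniqueDiffOn_Ioc 0 1 y hy)
  have h2 := heq ▸ hnn
  simp only [id, Pi.mul_apply] at h2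
  rw [le_div_iff₀ (by positivity)] at h2
  nlinarith [h2]

/-- The per-coordinate dual loss contribution is nondecreasing in the
probability. Let `φ` be three times differentiable on `(0,1]` with `φ' ≥ 0` on
`(0,1]`, and suppose the elasticity `u(t) = t·φ''(t)/φ'(t)` is nondecreasing on
`(0,1]`. Set `v(x,y) = φ''(y) + φ'''(y)(y − x)` and `ψ(x,y) = φ(y) − φ'(y)(y − x)`.
Fix `ν > 0` and `x₀ ∈ [0,1)`, and let `η` be differentiable on an open neighborhood
of `x₀` with `η(x) ∈ (0,1]`, `η(x) ≥ x`, `φ''(η(x))(η(x) − x) = ν`, and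
`v(x₀, η(x₀)) > 0`. Then `x ↦ ψ(x, η(x))` has derivative
`φ'(η(x₀)) − ν·φ''(η(x₀))/v(x₀, η(x₀)) ≥ 0` at `x₀`. -/
theorem dual_loss_increasing_in_probability
    (φ φ' φ'' φ''' : ℝ → ℝ)
    (hd1 : ∀ t ∈ Set.Ioc (0:ℝ) 1, HasDerivWithinAt φ (φ' t) (Set.Ioc 0 1) t)
    (hd2 : ∀ t ∈ Set.Ioc (0:ℝ) 1, HasDerivWithinAt φ' (φ'' t) (Set.Ioc 0 1) t)
    (hd3 : ∀ t ∈ Set.Ioc (0:ℝ) 1, HasDerivWithinAt φ'' (φ''' t) (Set.Ioc 0 1) t)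
    (hφ'nonneg : ∀ t ∈ Set.Ioc (0:ℝ) 1, 0 ≤ φ' t)
    (helas : MonotoneOn (fun t => t * φ'' t / φ' t) (Set.Ioc 0 1))
    (ν : ℝ) (hν : 0 < ν)
    (x₀ : ℝ) (hx₀ : x₀ ∈ Set.Ico (0:ℝ) 1)
    (U : Set ℝ) (hU : IsOpen U) (hx₀U : x₀ ∈ U)
    (η : ℝ → ℝ)
    (hηdiff : ∀ x ∈ U, DifferentiableAt ℝ η x)
    (hη : ∀ x ∈ U, η x ∈ Set.Ioc (0:ℝ) 1 ∧ x ≤ η x ∧ φ'' (η x) * (η x - x) = ν)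
    (hv : 0 < φ'' (η x₀) + φ''' (η x₀) * (η x₀ - x₀)) :
    HasDerivAt (fun x => φ (η x) - φ' (η x) * (η x - x))
      (φ' (η x₀) - ν * φ'' (η x₀) / (φ'' (η x₀) + φ''' (η x₀) * (η x₀ - x₀))) x₀ ∧
    0 ≤ φ' (η x₀) - ν * φ'' (η x₀) / (φ'' (η x₀) + φ''' (η x₀) * (η x₀ - x₀)) := by
  set y := η x₀ with hy
  obtain ⟨hyI, hxy, hyν⟩ := hη x₀ hx₀U
  rw [← hy] at hyI hxy hyν
  have hnhds : U ∈ nhds x₀ := hU.mem_nhds hx₀U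
  have hmaps : MapsTo η U (Ioc 0 1) := fun x hx => (hη x hx).1
  have hηd : HasDerivAt η (deriv η x₀) x₀ := (hηdiff x₀ hx₀U).hasDerivAt
  set e := deriv η x₀
  have comp : ∀ {g : ℝ → ℝ} {d : ℝ}, HasDerivWithinAt g d (Ioc 0 1) y →
      HasDerivAt (fun x => g (η x)) (d * e) x₀ := fun hg =>
    (HasDerivWithinAt.comp x₀ hg hηd.hasDerivWithinAt hmaps).hasDerivAt hnhds
  have hgap : HasDerivAt (fun x => η x - x) (e - 1) x₀ := hηd.sub (hasDerivAt_id x₀)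
  have hc1 := comp (hd1 y hyI)
  have hc2 := comp (hd2 y hyI)
  have hc3 := comp (hd3 y hyI)
  -- The constraint is locally constant in `x`, which determines `e = η'(x₀)`.
  have hconst : HasDerivAt (fun x => φ'' (η x) * (η x - x)) 0 x₀ :=
    (hasDerivAt_const x₀ ν).congr_of_eventuallyEq
      (by filter_upwards [hnhds] with x hx using (hη x hx).2.2)
  have he := (hc3.mul hgap).unique hconst
  simp only [← hy] at he
  have he' : e = φ'' y / (φ'' y + φ''' y * (y - x₀)) := by
    rw [eq_div_iff hv.ne']
    linarith
  refine ⟨?_, ?_⟩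
  · refine (hc1.sub (hc2.mul hgap)).congr_deriv ?_
    simp only [← hy]
    rw [mul_div_assoc, ← he', ← hyν]
    ring
  · have hlt : 0 < y - x₀ := by
      refine lt_of_le_of_ne (by linarith) fun h => ?_
      rw [← h, mul_zero] at hyν
      exact hν.ne hyν
    have hφ'' : 0 < φ'' y := pos_of_mul_pos_left (hyν ▸ hν) hlt.le
    have hφ' := pos_of_deriv_pos_of_nonneg hyI (hd2 y hyI) hφ'nonneg hφ''
    have hel := elasticity_deriv_ineq hyI (hd2 y hyI) (hd3 y hyI) hφ' helas
    rw [sub_nonneg, div_le_iff₀ hv, ← hyν]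
    -- `y` times the goal is `(y - x₀)` times `hel` plus the slack `x₀ φ' φ'' ≥ 0`.
    have hslack : 0 ≤ x₀ * (φ' y * φ'' y) := mul_nonneg hx₀.1 (mul_pos hφ' hφ'').le
    have hscaled := mul_le_mul_of_nonneg_left hel hlt.le
    refine le_of_mul_le_mul_left ?_ hyI.1
    linarith
end

section
/- Let φ : [0,1] → ℝ be a dual valid generator, let p ∈ (0,1], let ν > 0, and let y* ∈ [p,1] satisfy φ''(y*)·(y* − p) = ν. Then the function ψ(x) := ν·x − d_φ(p, x) is nondecreasing on the interval (0, y*]: its derivative ν − φ''(x)·(x − p) is ≥ 0 for all x ∈ (0, y*], because φ''(x)(x − p) ≤ 0 for x ≤ p, while for p ≤ x ≤ y* the map y ↦ φ''(y)(y − p) is nondecreasing on [p,1] by the second-argument convexity of d_φ(p,·), so φ''(x)(x − p) ≤ φ''(y*)(y* − p) = ν. -/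
/-!
The derivative of `y ↦ d_φ(t, y)` is `φ''(y)(y - t)`, so convexity of `d_φ(t, ·)` on `[t, 1]` makes
`y ↦ φ''(y)(y - t)` nondecreasing there (`breg_deriv_mono`). With `t = y / 2` this gives
`φ''(y) ≥ 0`, because the derivative vanishes at `t`; hence `φ''(x)(x - p) ≤ 0 < ν` for `x ≤ p`.
With `t = p` it gives `φ''(x)(x - p) ≤ φ''(y*)(y* - p) = ν` for `p ≤ x ≤ y*`. Thus `ψ' ≥ 0` on
`(0, y*]`.
-/

open Set Filter

lemma breg_hasDerivWithinAt_s18 {φ φ' : ℝ → ℝ} {s : Set ℝ} {y c : ℝ} (t : ℝ)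
    (h1 : HasDerivWithinAt φ (φ' y) s y) (h2 : HasDerivWithinAt φ' c s y) :
    HasDerivWithinAt (fun y => breg φ φ' t y) (c * (y - t)) s y := by
  unfold breg
  have h := (h1.const_sub (φ t)).sub (h2.mul ((hasDerivWithinAt_id y s).const_sub t))
  refine h.congr_deriv ?_
  simp only [id]
  ring

lemma breg_deriv_mono {φ φ' φ'' : ℝ → ℝ}
    (hd1 : ∀ t ∈ Set.Ioc (0:ℝ) 1, HasDerivWithinAt φ (φ' t) (Set.Ioc 0 1) t)
    (hd2 : ∀ t ∈ Set.Ioc (0:ℝ) 1, HasDerivWithinAt φ' (φ'' t) (Set.Ioc 0 1) t)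
    {t x y : ℝ} (ht : 0 < t)
    (hc : ConvexOn ℝ (Set.Icc t 1) (fun y => breg φ φ' t y))
    (htx : t ≤ x) (hxy : x ≤ y) (hy : y ≤ 1) :
    φ'' x * (x - t) ≤ φ'' y * (y - t) := by
  rcases hxy.eq_or_lt with rfl | hlt
  · exact le_rfl
  have hx' : x ∈ Set.Icc t 1 := ⟨htx, hxy.trans hy⟩
  have hy' : y ∈ Set.Icc t 1 := ⟨htx.trans hxy, hy⟩
  have hsub : Set.Icc t 1 ⊆ Set.Ioc (0:ℝ) 1 := fun z hz => ⟨ht.trans_le hz.1, hz.2⟩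
  have hd : ∀ z ∈ Set.Icc t 1,
      HasDerivWithinAt (fun y => breg φ φ' t y) (φ'' z * (z - t)) (Set.Icc t 1) z := fun z hz =>
    (breg_hasDerivWithinAt_s18 t (hd1 z (hsub hz)) (hd2 z (hsub hz))).mono hsub
  exact (hc.le_slope_of_hasDerivWithinAt hx' hy' hlt (hd x hx')).trans
    (hc.slope_le_of_hasDerivWithinAt hx' hy' hlt (hd y hy'))

/-- Monotonicity of the auxiliary function `ψ`. Let `φ` be dual valid
(thrice differentiable on `(0,1]`, `x·φ''(x) → 0` as `x → 0⁺`, `y ↦ d_φ(x,y)` strictly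
convex on `[x,1]` for `x ∈ (0,1]`, `y ↦ d_φ(0,y)` strictly convex on `(0,1]`). Let
`p ∈ (0,1]`, `ν > 0`, and `y* ∈ [p,1]` with `φ''(y*)(y* − p) = ν`. Then the function
`ψ(x) = ν·x − d_φ(p,x)` is nondecreasing on `(0, y*]`, and its derivative
`ν − φ''(x)(x − p)` is nonnegative there. -/
theorem dual_helper_psi_monotone
    (φ φ' φ'' φ''' : ℝ → ℝ)
    (hd1 : ∀ t ∈ Set.Ioc (0:ℝ) 1, HasDerivWithinAt φ (φ' t) (Set.Ioc 0 1) t)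
    (hd2 : ∀ t ∈ Set.Ioc (0:ℝ) 1, HasDerivWithinAt φ' (φ'' t) (Set.Ioc 0 1) t)
    (hd3 : ∀ t ∈ Set.Ioc (0:ℝ) 1, HasDerivWithinAt φ'' (φ''' t) (Set.Ioc 0 1) t)
    (hlim : Filter.Tendsto (fun t => t * φ'' t) (nhdsWithin 0 (Set.Ioi 0)) (nhds 0))
    (hsc1 : ∀ t ∈ Set.Ioc (0:ℝ) 1, StrictConvexOn ℝ (Set.Icc t 1) (fun y => breg φ φ' t y))
    (hsc2 : StrictConvexOn ℝ (Set.Ioc 0 1) (fun y => breg φ φ' 0 y))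
    (p : ℝ) (hp : p ∈ Set.Ioc (0:ℝ) 1)
    (ν : ℝ) (hν : 0 < ν)
    (ystar : ℝ) (hystar : ystar ∈ Set.Icc p 1)
    (heq : φ'' ystar * (ystar - p) = ν) :
    (∀ x ∈ Set.Ioc (0:ℝ) ystar, 0 ≤ ν - φ'' x * (x - p)) ∧
    MonotoneOn (fun x => ν * x - breg φ φ' p x) (Set.Ioc 0 ystar) := by
  have hnn : ∀ x ∈ Set.Ioc (0:ℝ) 1, 0 ≤ φ'' x := by
    intro x hx
    have hx2 : x / 2 ∈ Set.Ioc (0:ℝ) 1 := ⟨by linarith [hx.1], by linarith [hx.1, hx.2]⟩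
    have h := breg_deriv_mono hd1 hd2 hx2.1 (hsc1 _ hx2).convexOn le_rfl
      (by linarith [hx.1]) hx.2
    rw [sub_self, mul_zero] at h
    exact nonneg_of_mul_nonneg_left h (by linarith [hx.1])
  have hder : ∀ x ∈ Set.Ioc (0:ℝ) ystar, 0 ≤ ν - φ'' x * (x - p) := by
    intro x hx
    rcases le_total x p with hxp | hpx
    · have := mul_nonneg (hnn x ⟨hx.1, hxp.trans hp.2⟩) (sub_nonneg.2 hxp)
      linarith
    · have := breg_deriv_mono hd1 hd2 hp.1 (hsc1 p hp).convexOn hpx hx.2 hystar.2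
      linarith
  have hsub : Set.Ioc 0 ystar ⊆ Set.Ioc (0:ℝ) 1 := Set.Ioc_subset_Ioc_right hystar.2
  have hψ : ∀ x ∈ Set.Ioc (0:ℝ) ystar, HasDerivWithinAt (fun x => ν * x - breg φ φ' p x)
      (ν - φ'' x * (x - p)) (Set.Ioc 0 ystar) x := by
    intro x hx
    have h := (((hasDerivWithinAt_id x _).const_mul ν).sub
      (breg_hasDerivWithinAt_s18 p (hd1 x (hsub hx)) (hd2 x (hsub hx)))).mono hsub
    exact h.congr_deriv (by ring)
  refine ⟨hder, monotoneOn_of_hasDerivWithinAt_nonneg (convex_Ioc 0 ystar)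
    (fun x hx => (hψ x hx).continuousWithinAt)
    (fun x hx => (hψ x (interior_subset hx)).mono interior_subset)
    (fun x hx => hder x (interior_subset hx))⟩
end

section
/- Let φ be primal valid with derivative f = φ', and define the restricted convex conjugate φ*(t) = sup_{y ∈ [0,1]} ( t·y − φ(y) ). Let V ≥ 1, let p ∈ Δ_V, fix k ∈ {1,…,V}, and suppose there exist ν_k ∈ ℝ and q ∈ Δ_k such that f(q_j) = f(p_j) + ν_k for every j ∈ {1,…,k}. Then the regularization-free primal cost of keeping the first k coordinates satisfies the exact dual representation: Σ_{j=1}^k d_φ(q_j, p_j) + Σ_{j=k+1}^V d_φ(0, p_j) = ν_k − Σ_{j=1}^k φ*( f(p_j) + ν_k ) + Σ_{j=1}^V d_φ(0, p_j) − k·φ(0). -/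
/-!
For each kept coordinate, convexity puts the graph of `φ` above its tangent at `q_j`, so the
supremum defining `φ*` at the slope `φ' (q_j)` is attained at `q_j` (Fenchel equality,
`restrictedConj_deriv_eq`). With `φ' (q_j) = φ' (p_j) + ν_k` this gives
`d_φ(q_j, p_j) - d_φ(0, p_j) = ν_k q_j - φ*(φ' (p_j) + ν_k) - φ(0)`. Summing over the kept
coordinates and using `∑ q_j = 1` yields the claim, because the total `∑ d_φ(0, p_j)` splits into
its kept and discarded parts (`sum_castLE_add_sum_filter`).
-/

open Finset Set

/-- The convex conjugate of `φ` restricted to `[0,1]`: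
`φ*(t) = sup_{y ∈ [0,1]} (t·y − φ(y))`. -/
noncomputable def restrictedConj (φ : ℝ → ℝ) (t : ℝ) : ℝ :=
  sSup ((fun y => t * y - φ y) '' Set.Icc 0 1)

/-- Fenchel equality at a point of `[0,1]`, endpoints included: the one-sided derivatives there
still give a supporting line on `[0,1]`. -/
theorem restrictedConj_deriv_eq {φ : ℝ → ℝ} {x d : ℝ}
    (hconv : ConvexOn ℝ (Set.Icc 0 1) φ) (hx : x ∈ Set.Icc (0:ℝ) 1)
    (hd : HasDerivWithinAt φ d (Set.Icc 0 1) x) :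
    restrictedConj φ d = d * x - φ x := by
  have hgreatest : IsGreatest ((fun y => d * y - φ y) '' Set.Icc 0 1) (d * x - φ x) := by
    refine ⟨⟨x, hx, rfl⟩, ?_⟩
    rintro _ ⟨y, hy, rfl⟩
    change d * y - φ y ≤ d * x - φ x
    rcases lt_trichotomy x y with h | rfl | h
    · have hslope := hconv.le_slope_of_hasDerivWithinAt hx hy h hd
      rw [slope_def_field, le_div_iff₀ (sub_pos.2 h)] at hslope
      linarith
    · exact le_rfl
    · have hslope := hconv.slope_le_of_hasDerivWithinAt hy hx h hd
      rw [slope_def_field, div_le_iff₀ (sub_pos.2 h)] at hslope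
      linarith
  exact hgreatest.csSup_eq

theorem sum_castLE_add_sum_filter {V k : ℕ} (hkV : k ≤ V) (g : Fin V → ℝ) :
    (∑ j : Fin k, g (Fin.castLE hkV j))
      + (∑ j ∈ Finset.univ.filter (fun j : Fin V => k ≤ (j : ℕ)), g j) = ∑ j, g j := by
  have hmap : Finset.univ.map (Fin.castLEEmb hkV)
      = Finset.univ.filter (fun j : Fin V => ¬ k ≤ (j : ℕ)) := by
    ext j
    simp only [Finset.mem_map, Finset.mem_univ, true_and, Finset.mem_filter, not_le]
    exact ⟨fun ⟨i, hi⟩ => hi ▸ i.2, fun h => ⟨⟨j, h⟩, rfl⟩⟩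
  have hsum := Finset.sum_map Finset.univ (Fin.castLEEmb hkV) g
  rw [hmap] at hsum
  rw [← Finset.sum_filter_add_sum_filter_not Finset.univ (fun j : Fin V => k ≤ (j : ℕ)) g,
    hsum, add_comm]
  rfl

/-- Dual representation of the primal cost of keeping the first `k`
coordinates. For a primal valid `φ` with derivative `f = φ'`, `p ∈ Δ_V`, and
`ν_k ∈ ℝ`, `q ∈ Δ_k` satisfying the KKT equations `f(q_j) = f(p_j) + ν_k`,
`Σ_{j≤k} d_φ(q_j, p_j) + Σ_{j>k} d_φ(0, p_j)
 = ν_k − Σ_{j≤k} φ*(f(p_j) + ν_k) + Σ_{j=1}^V d_φ(0, p_j) − k·φ(0)`. -/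
theorem primal_cost_dual_representation
    (V k : ℕ) (hk : 1 ≤ k) (hkV : k ≤ V)
    (p : Fin V → ℝ) (hp0 : ∀ i, p i ∈ Set.Icc (0:ℝ) 1) (hp1 : (∑ i, p i) = 1)
    (φ φ' : ℝ → ℝ)
    (hconv : ConvexOn ℝ (Set.Icc 0 1) φ)
    (hderiv : ∀ x ∈ Set.Icc (0:ℝ) 1, HasDerivWithinAt φ (φ' x) (Set.Icc 0 1) x)
    (hcont : ContinuousOn φ' (Set.Icc 0 1))
    (hstrict : StrictConvexOn ℝ (Set.Ioo 0 1) φ)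
    (νk : ℝ) (q : Fin k → ℝ) (hq : q ∈ probSimplex k)
    (hkkt : ∀ j : Fin k, φ' (q j) = φ' (p (Fin.castLE hkV j)) + νk) :
    (∑ j : Fin k, breg φ φ' (q j) (p (Fin.castLE hkV j)))
      + (∑ j ∈ Finset.univ.filter (fun j : Fin V => k ≤ (j : ℕ)), breg φ φ' 0 (p j))
    = νk - (∑ j : Fin k, restrictedConj φ (φ' (p (Fin.castLE hkV j)) + νk))
      + (∑ j : Fin V, breg φ φ' 0 (p j)) - (k : ℝ) * φ 0 := by
  have hterm : ∀ j : Fin k, breg φ φ' (q j) (p (Fin.castLE hkV j))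
      = νk * q j - restrictedConj φ (φ' (p (Fin.castLE hkV j)) + νk)
        + breg φ φ' 0 (p (Fin.castLE hkV j)) - φ 0 := by
    intro j
    have hconj := restrictedConj_deriv_eq hconv (hq.1 j) (hderiv _ (hq.1 j))
    rw [← hkkt j, hconj, hkkt j]
    unfold breg
    ring
  rw [← sum_castLE_add_sum_filter hkV (fun j => breg φ φ' 0 (p j)),
    Finset.sum_congr rfl (fun j _ => hterm j)]
  simp only [Finset.sum_sub_distrib, Finset.sum_add_distrib, ← Finset.mul_sum, hq.2,
    Finset.sum_const, Finset.card_univ, Fintype.card_fin, nsmul_eq_mul]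
  ring
end
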